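/- arXiv:2202.07298 — 9 statements merged into one kernel-verified Lean document; each statement's English description precedes it below -/
import Mathlib

section
/- For all integers r ≥ 1 and m, k ≥ 0, one has (-1)^{r(r-1)/2} · det((C(k+i+j, m+r-1))_{i,j=0}^{r-1}) = ⟨k choose m⟩_r, i.e. the signed Hankel determinant of order r of the (m+r-1)-st column of Pascal's triangle, started at index k, equals the r-Hoggatt binomial coefficient. -/
/-- The `r`-Hoggatt binomial `⟨n choose k⟩_r = ∏_{j=0}^{r-1} C(n+j,k)/C(k+j,k)`, as a
rational number. -/
def hoggatt (r n k : ℕ) : ℚ :=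
  ∏ j ∈ Finset.range r, ((n + j).choose k : ℚ) / ((k + j).choose k : ℚ)

lemma hog_vand (r i n N : ℕ) (hi : i < r) :
    ((i + n).choose N : ℚ) =
      ∑ s : Fin r, (i.choose s.1 : ℚ) * (if s.1 ≤ N then (n.choose (N - s.1) : ℚ) else 0) := by
  rw [Fin.sum_univ_eq_sum_range
    (fun s => (i.choose s : ℚ) * (if s ≤ N then (n.choose (N - s) : ℚ) else 0)) r]
  rw [Nat.add_choose_eq, Finset.Nat.sum_antidiagonal_eq_sum_range_succ_mk]
  push_cast
  have h1 : ∑ s ∈ Finset.range N.succ, (i.choose s : ℚ) * (n.choose (N - s) : ℚ)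
      = ∑ s ∈ Finset.range (r + N + 1),
        (i.choose s : ℚ) * (if s ≤ N then (n.choose (N - s) : ℚ) else 0) := by
    trans ∑ s ∈ Finset.range N.succ,
        (i.choose s : ℚ) * (if s ≤ N then (n.choose (N - s) : ℚ) else 0)
    · refine Finset.sum_congr rfl fun s hs => ?_
      rw [if_pos (by simp at hs; omega)]
    apply Finset.sum_subset
    · intro s hs
      simp at hs ⊢
      omega
    · intro s _ hs
      rw [if_neg (by simp at hs; omega), mul_zero]
  rw [h1]
  symm
  apply Finset.sum_subset
  · intro s hs
    simp at hs ⊢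
    omega
  · intro s _ hs
    rw [Nat.choose_eq_zero_of_lt (by simp at hs; omega)]
    simp

lemma hog_detL (r : ℕ) :
    (Matrix.of fun i s : Fin r => (i.1.choose s.1 : ℚ)).det = 1 := by
  rw [Matrix.det_of_lowerTriangular]
  · simp
  · intro i j hij
    have : i < j := hij
    simp only [Matrix.of_apply]
    rw [Nat.choose_eq_zero_of_lt (by exact this)]
    simp

lemma hog_detA (r a : ℕ) :
    (Matrix.of fun j s : Fin r => ((a + j.1).choose s.1 : ℚ)).det = 1 := by
  have h : (Matrix.of fun j s : Fin r => ((a + j.1).choose s.1 : ℚ)) =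
      (Matrix.of fun i s : Fin r => (i.1.choose s.1 : ℚ)) *
      (Matrix.of fun t s : Fin r => if t.1 ≤ s.1 then (a.choose (s.1 - t.1) : ℚ) else 0) := by
    ext j s
    rw [Matrix.mul_apply, Matrix.of_apply, add_comm, hog_vand r j.1 a s.1 j.2]
    rfl
  rw [h, Matrix.det_mul, hog_detL, Matrix.det_of_upperTriangular]
  · simp
  · intro i j hij
    have : j < i := hij
    simp only [Matrix.of_apply]
    rw [if_neg]
    exact not_le.2 this

lemma hog_detB (r m k : ℕ) (hr : 1 ≤ r) :
    (Matrix.of fun s j : Fin r => ((k + j.1).choose (m + s.1) : ℚ)).det = hoggatt r k m := by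
  have h : (Matrix.of fun s j : Fin r => ((k + j.1).choose (m + s.1) : ℚ)) =
      Matrix.of fun s j : Fin r => (((m + s.1).choose m : ℚ)⁻¹) *
        (Matrix.of fun s j : Fin r => ((k + j.1).choose m : ℚ) *
          (Matrix.of fun s j : Fin r => ((k + j.1 - m).choose s.1 : ℚ)) s j) s j := by
    ext s j
    simp only [Matrix.of_apply]
    have h0 : ((m + s.1).choose m : ℚ) ≠ 0 := by
      exact_mod_cast (Nat.choose_pos (Nat.le_add_right _ _)).ne'
    have := Nat.choose_mul (n := k + j.1) (k := m + s.1) (s := m) (by omega)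
    rw [Nat.add_sub_cancel_left] at this
    have h2 : ((k + j.1).choose (m + s.1) : ℚ) * ((m + s.1).choose m : ℚ) =
      ((k + j.1).choose m : ℚ) * ((k + j.1 - m).choose s.1 : ℚ) := by exact_mod_cast this
    rw [← h2]
    field_simp
  rw [h, Matrix.det_mul_column, Matrix.det_mul_row]
  unfold hoggatt
  rw [Finset.prod_div_distrib, Finset.prod_inv_distrib,
    Fin.prod_univ_eq_prod_range (fun s => ((m + s).choose m : ℚ)) r,
    Fin.prod_univ_eq_prod_range (fun s => ((k + s).choose m : ℚ)) r]
  by_cases hk : m ≤ k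
  · have h3 : (Matrix.of fun s j : Fin r => ((k + j.1 - m).choose s.1 : ℚ)).det = 1 := by
      rw [← hog_detA r (k - m), ← Matrix.det_transpose]
      congr 1
      ext i j
      simp only [Matrix.transpose_apply, Matrix.of_apply]
      rw [show k + i.1 - m = k - m + i.1 by omega]
    rw [h3, mul_one, div_eq_inv_mul]
  · have : ∏ s ∈ Finset.range r, ((k + s).choose m : ℚ) = 0 := by
      apply Finset.prod_eq_zero (i := 0) (by simp; omega)
      rw [Nat.choose_eq_zero_of_lt (by omega)]
      simp
    rw [this]
    simp

lemma hog_sign (r : ℕ) :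
    (Equiv.Perm.sign (Fin.revPerm : Equiv.Perm (Fin r))) = (-1) ^ (r * (r - 1) / 2) := by
  rw [Equiv.Perm.sign_eq_prod_prod_Iio]
  have : ∀ j : Fin r, ∏ i ∈ Finset.Iio j,
      (if (Fin.revPerm : Equiv.Perm (Fin r)) i < Fin.revPerm j then (1 : ℤˣ) else -1)
      = (-1) ^ j.1 := by
    intro j
    rw [Finset.prod_congr rfl (g := fun _ => (-1 : ℤˣ))]
    · simp
    · intro i hi
      rw [if_neg]
      simp at hi ⊢
      exact hi.le
  rw [Finset.prod_congr rfl (fun j _ => this j), Finset.prod_pow_eq_pow_sum,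
    Fin.sum_univ_eq_sum_range (fun j => j) r, Finset.sum_range_id]

/-- For `r ≥ 1` and `m, k ≥ 0`, the signed `r × r` Hankel determinant of the `(m+r-1)`-st
column of Pascal's triangle, started at index `k`, equals the `r`-Hoggatt binomial
`⟨k choose m⟩_r`. -/
theorem signed_hankel_det_pascal_column_eq_hoggatt (r m k : ℕ) (hr : 1 ≤ r) :
    (-1 : ℚ) ^ (r * (r - 1) / 2) *
      (Matrix.of fun i j : Fin r => ((k + i.1 + j.1).choose (m + r - 1) : ℚ)).det =
    hoggatt r k m := by
  have h : (Matrix.of fun i j : Fin r => ((k + i.1 + j.1).choose (m + r - 1) : ℚ)) =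
      (Matrix.of fun i s : Fin r => (i.1.choose s.1 : ℚ)) *
      (Matrix.of fun s j : Fin r => ((k + j.1).choose (m + s.1) : ℚ)).submatrix
        (Fin.revPerm : Equiv.Perm (Fin r)) id := by
    ext i j
    rw [Matrix.mul_apply, Matrix.of_apply, show k + i.1 + j.1 = i.1 + (k + j.1) by ring,
      hog_vand r i.1 (k + j.1) _ i.2]
    refine Finset.sum_congr rfl fun s _ => ?_
    have hs := s.2
    rw [if_pos (by omega)]
    simp only [Matrix.of_apply, Matrix.submatrix_apply, Fin.revPerm_apply, Fin.val_rev, id]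
    rw [show m + r - 1 - s.1 = m + (r - (s.1 + 1)) by omega]
  rw [h, Matrix.det_mul, hog_detL, Matrix.det_permute, hog_detB r m k hr, hog_sign]
  push_cast
  rw [one_mul, ← mul_assoc, ← mul_pow]
  simp
end

section
/- For all integers r ≥ 1 and m ≥ r-1, there exists a polynomial A with nonnegative integer coefficients of degree at most (r-1)(m-r) such that, as formal power series over ℚ, (1-x)^{r(m-r+1)+1} · ∑_{k≥0} d_k(m, r) x^k = (-1)^{r(r-1)/2} · x^{m-r+1} · A(x). -/
/-- The Hankel determinant `d_k(m, r) = det((C(k+i+j, m))_{i,j=0}^{r-1})`, taken over `ℚ`. -/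
def hankelPascal (k m r : ℕ) : ℚ :=
  (Matrix.of fun i j : Fin r => ((k + i.1 + j.1).choose m : ℚ)).det

open PowerSeries in
lemma hp_coeff_XD (P : PowerSeries ℚ) (j : ℕ) :
    coeff j (X * derivative ℚ P) = (j : ℚ) * coeff j P := by
  cases j with
  | zero => simp
  | succ j =>
    rw [coeff_succ_X_mul, coeff_derivative]; push_cast; ring

open PowerSeries in
lemma hp_series_step (f : ℕ → ℚ) (N : ℕ) (c : ℚ) :
    (1 - X) ^ (N + 2) * PowerSeries.mk (fun k => ((k : ℚ) + c) * f k) =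
      (X * derivative ℚ ((1 - X) ^ (N + 1) * PowerSeries.mk f)
        + C c * ((1 - X) ^ (N + 1) * PowerSeries.mk f))
      + X * (C ((N : ℚ) + 1 - c) * ((1 - X) ^ (N + 1) * PowerSeries.mk f)
        - X * derivative ℚ ((1 - X) ^ (N + 1) * PowerSeries.mk f)) := by
  have h : PowerSeries.mk (fun k => ((k : ℚ) + c) * f k)
      = X * derivative ℚ (PowerSeries.mk f) + C c * PowerSeries.mk f := by
    ext j
    rw [map_add, hp_coeff_XD, coeff_C_mul, coeff_mk, coeff_mk]; ring
  have hd : derivative ℚ ((1 - X) ^ (N + 1) * PowerSeries.mk f)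
      = (1 - X) ^ (N + 1) * derivative ℚ (PowerSeries.mk f)
        - ((N : PowerSeries ℚ) + 1) * (1 - X) ^ N * PowerSeries.mk f := by
    rw [Derivation.leibniz, derivative_pow, map_sub, derivative_one, derivative_X]
    simp only [smul_eq_mul, Nat.add_sub_cancel]
    push_cast
    ring
  have hc : C ((N : ℚ) + 1 - c) = (N : PowerSeries ℚ) + 1 - C c := by
    simp
  rw [h, hd, hc]
  ring

def hpGood (f : ℕ → ℚ) (N a b : ℕ) : Prop :=
  ∀ j, 0 ≤ PowerSeries.coeff j ((1 - PowerSeries.X) ^ (N + 1) * PowerSeries.mk f) ∧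
    (PowerSeries.coeff j ((1 - PowerSeries.X) ^ (N + 1) * PowerSeries.mk f) ≠ 0 →
      a ≤ j ∧ j + b ≤ N)

open PowerSeries in
lemma hp_coeff_zero (f : ℕ → ℚ) (N : ℕ) (c : ℚ) :
    coeff 0 ((1 - X) ^ (N + 1 + 1) * PowerSeries.mk (fun k => ((k : ℚ) + c) * f k)) =
      c * coeff 0 ((1 - X) ^ (N + 1) * PowerSeries.mk f) := by
  rw [hp_series_step, map_add, map_add, hp_coeff_XD, coeff_C_mul, coeff_zero_X_mul]
  simp

open PowerSeries in
lemma hp_coeff_succ (f : ℕ → ℚ) (N : ℕ) (c : ℚ) (j : ℕ) :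
    coeff (j + 1) ((1 - X) ^ (N + 1 + 1) * PowerSeries.mk (fun k => ((k : ℚ) + c) * f k)) =
      ((j : ℚ) + 1 + c) * coeff (j + 1) ((1 - X) ^ (N + 1) * PowerSeries.mk f)
      + ((N : ℚ) + 1 - c - j) * coeff j ((1 - X) ^ (N + 1) * PowerSeries.mk f) := by
  rw [hp_series_step, map_add, map_add, hp_coeff_XD, coeff_C_mul, coeff_succ_X_mul, map_sub,
    hp_coeff_XD, coeff_C_mul]
  push_cast
  ring

/-- General step. -/
lemma hp_step (f : ℕ → ℚ) (N a b a' b' : ℕ) (c : ℤ) (h : hpGood f N a b)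
    (h1 : -(a : ℤ) ≤ c) (h2 : c ≤ b + 1)
    (ha : a' = a ∨ (a' = a + 1 ∧ c = -(a : ℤ)))
    (hb : b' = b ∨ (b' = b + 1 ∧ c = b + 1)) :
    hpGood (fun k => ((k : ℚ) + c) * f k) (N + 1) a' b' := by
  have key1 : ∀ j : ℕ, PowerSeries.coeff j
      ((1 - PowerSeries.X) ^ (N + 1) * PowerSeries.mk f) ≠ 0 →
      (0 : ℚ) ≤ (j : ℚ) + c := by
    intro j hj
    have := ((h j).2 hj).1
    have : (0 : ℤ) ≤ (j : ℤ) + c := by omega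
    exact_mod_cast this
  have key2 : ∀ j : ℕ, PowerSeries.coeff j
      ((1 - PowerSeries.X) ^ (N + 1) * PowerSeries.mk f) ≠ 0 →
      (0 : ℚ) ≤ (N : ℚ) + 1 - c - j := by
    intro j hj
    have := ((h j).2 hj).2
    have : (0 : ℤ) ≤ (N : ℤ) + 1 - c - j := by omega
    exact_mod_cast this
  have n1 : ∀ j : ℕ, 0 ≤ ((j : ℚ) + c) * PowerSeries.coeff j
      ((1 - PowerSeries.X) ^ (N + 1) * PowerSeries.mk f) := by
    intro j
    by_cases hj : PowerSeries.coeff j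
      ((1 - PowerSeries.X) ^ (N + 1) * PowerSeries.mk f) = 0
    · rw [hj]; simp
    · exact mul_nonneg (key1 j hj) (h j).1
  have n2 : ∀ j : ℕ, 0 ≤ ((N : ℚ) + 1 - c - j) * PowerSeries.coeff j
      ((1 - PowerSeries.X) ^ (N + 1) * PowerSeries.mk f) := by
    intro j
    by_cases hj : PowerSeries.coeff j
      ((1 - PowerSeries.X) ^ (N + 1) * PowerSeries.mk f) = 0
    · rw [hj]; simp
    · exact mul_nonneg (key2 j hj) (h j).1
  have z1 : ∀ j : ℕ, ((j : ℚ) + c) * PowerSeries.coeff j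
      ((1 - PowerSeries.X) ^ (N + 1) * PowerSeries.mk f) ≠ 0 → a' ≤ j ∧ j + b' ≤ N + 1 := by
    intro j hj
    have hj1 := left_ne_zero_of_mul hj
    have := (h j).2 (right_ne_zero_of_mul hj)
    have hj2 : (j : ℤ) + c ≠ 0 := by exact_mod_cast hj1
    omega
  have z2 : ∀ j : ℕ, ((N : ℚ) + 1 - c - j) * PowerSeries.coeff j
      ((1 - PowerSeries.X) ^ (N + 1) * PowerSeries.mk f) ≠ 0 →
      a' ≤ j + 1 ∧ j + 1 + b' ≤ N + 1 := by
    intro j hj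
    have hj1 := left_ne_zero_of_mul hj
    have := (h j).2 (right_ne_zero_of_mul hj)
    have hj2 : (N : ℤ) + 1 - c - j ≠ 0 := by exact_mod_cast hj1
    omega
  intro j
  cases j with
  | zero =>
    have e := hp_coeff_zero f N c
    have n := n1 0
    have z := z1 0
    simp only [Nat.cast_zero, zero_add] at n z
    rw [e]
    refine ⟨n, fun hh => ?_⟩
    have := z hh
    omega
  | succ j =>
    have e := hp_coeff_succ f N c j
    have n := n1 (j + 1)
    have z := z1 (j + 1)
    have n' := n2 j
    have z' := z2 j
    push_cast at n z
    rw [e]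
    refine ⟨add_nonneg n n', fun hh => ?_⟩
    by_cases h0 : ((j : ℚ) + 1 + c) * PowerSeries.coeff (j + 1)
      ((1 - PowerSeries.X) ^ (N + 1) * PowerSeries.mk f) = 0
    · rw [h0, zero_add] at hh
      exact z' hh
    · exact z h0

lemma hp_base : hpGood (fun _ => 1) 0 0 0 := by
  have : (1 - PowerSeries.X) ^ (0 + 1) * PowerSeries.mk (fun _ => (1 : ℚ)) = 1 := by
    rw [zero_add, pow_one, mul_comm]
    exact PowerSeries.mk_one_mul_one_sub_eq_one ℚ
  intro j
  rw [this, PowerSeries.coeff_one]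
  split_ifs with h <;> simp [h]

lemma hp_row (n : ℕ) : hpGood (fun k => ∏ l ∈ Finset.range n, ((k : ℚ) - l)) n n 0 := by
  induction n with
  | zero => simpa using hp_base
  | succ n ih =>
    have := hp_step _ n n 0 (n + 1) 0 (-(n : ℤ)) ih (by omega) (by omega) (by omega) (by omega)
    convert this using 2 with k
    rw [Finset.prod_range_succ]; push_cast; ring

lemma hp_weak (f : ℕ → ℚ) (N a b : ℕ) (h : hpGood f N a b) {ι : Type*} (s : Finset ι)
    (c : ι → ℤ) (h1 : ∀ i ∈ s, -(a : ℤ) ≤ c i) (h2 : ∀ i ∈ s, c i ≤ b + 1) :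
    hpGood (fun k => (∏ i ∈ s, ((k : ℚ) + c i)) * f k) (N + s.card) a b := by
  classical
  induction s using Finset.induction_on with
  | empty => simpa using h
  | insert x s hx ih =>
    have ih' := ih (fun i hi => h1 i (Finset.mem_insert_of_mem hi))
      (fun i hi => h2 i (Finset.mem_insert_of_mem hi))
    have := hp_step _ _ a b a b (c x) ih' (h1 x (Finset.mem_insert_self _ _))
      (h2 x (Finset.mem_insert_self _ _)) (by omega) (by omega)
    rw [Finset.card_insert_of_notMem hx, ← add_assoc]
    convert this using 2 with k
    rw [Finset.prod_insert hx]; ring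

lemma hp_col (f : ℕ → ℚ) (N a : ℕ) (h : hpGood f N a 0) (r : ℕ) :
    hpGood (fun k => (∏ i ∈ Finset.range r, ((k : ℚ) + (i + 1))) * f k) (N + r) a r := by
  induction r with
  | zero => simpa using h
  | succ r ih =>
    have := hp_step _ (N + r) a r a (r + 1) (r + 1) ih (by omega) (by omega) (by omega) (by omega)
    rw [← add_assoc]
    convert this using 2 with k
    rw [Finset.prod_range_succ]; push_cast; ring

lemma hp_prod (r n : ℕ) :
    hpGood (fun k => ∏ i ∈ Finset.range (r + 1), ∏ l ∈ Finset.range (n + 1),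
      ((k : ℚ) + i - l)) ((r + 1) * (n + 1)) (n + 1) r := by
  have h := hp_weak _ _ _ _ (hp_col _ _ _ (hp_row (n + 1)) r)
    (Finset.range r ×ˢ Finset.range n) (fun p => (p.1 : ℤ) - p.2)
    (by rintro ⟨i, l⟩ hp; simp at hp ⊢; omega)
    (by rintro ⟨i, l⟩ hp; simp at hp ⊢; omega)
  have e : n + 1 + r + (Finset.range r ×ˢ Finset.range n).card = (r + 1) * (n + 1) := by
    simp; ring
  rw [e] at h
  convert h using 2 with k
  rw [Finset.prod_range_succ', Finset.prod_product]
  simp_rw [Finset.prod_range_succ' (fun l => ((k : ℚ) + ((_ : ℕ) : ℚ) - (l : ℚ)))]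
  rw [Finset.prod_mul_distrib]
  simp only [Finset.prod_range_succ' _ n]
  push_cast
  simp
  ring_nf

lemma hp_choose_split (n l : ℕ) (a : ℕ) :
    (a.choose (n + l) : ℚ) = (∏ t ∈ Finset.range n, ((a : ℚ) - t)) *
      (((n + l).factorial : ℚ)⁻¹ * (descPochhammer ℚ l).eval ((a : ℚ) - n)) := by
  have hp : ∀ n : ℕ, (descPochhammer ℚ n).eval (a : ℚ) = ∏ t ∈ Finset.range n, ((a : ℚ) - t) := by
    intro n
    induction n with
    | zero => simp
    | succ n ih => rw [descPochhammer_succ_eval, ih, Finset.prod_range_succ]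
  have h1 : (descPochhammer ℚ (n + l)).eval (a : ℚ) =
      (∏ t ∈ Finset.range n, ((a : ℚ) - t)) * (descPochhammer ℚ l).eval ((a : ℚ) - n) := by
    rw [← descPochhammer_mul, Polynomial.eval_mul, Polynomial.eval_comp, hp]
    simp
  have h2 : (descPochhammer ℚ (n + l)).eval (a : ℚ) =
      ((n + l).factorial : ℚ) * (a.choose (n + l) : ℚ) := by
    rw [descPochhammer_eval_eq_descFactorial, Nat.descFactorial_eq_factorial_mul_choose]
    push_cast; ring
  have h3 : ((n + l).factorial : ℚ) ≠ 0 := by exact_mod_cast Nat.factorial_ne_zero _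
  have h4 := h2.symm.trans h1
  field_simp
  linarith

lemma hp_vand (n s a j : ℕ) (hj : j ≤ s) :
    (a + j).choose (n + s) = ∑ l : Fin (s + 1), a.choose (n + s - l) * j.choose l := by
  rw [add_comm a j, Nat.add_choose_eq, Finset.Nat.sum_antidiagonal_eq_sum_range_succ_mk,
    Fin.sum_univ_eq_sum_range (fun l => a.choose (n + s - l) * j.choose l)]
  symm
  have : Finset.range (s + 1) ⊆ Finset.range (n + s).succ := by
    intro x; simp; omega
  rw [Finset.sum_subset this]
  · exact Finset.sum_congr rfl fun _ _ => mul_comm _ _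
  · intro x _ hx
    rw [Nat.choose_eq_zero_of_lt (n := j) (k := x)]
    · simp
    · simp at hx; omega

lemma hp_sign (s : ℕ) :
    ∏ i : Fin (s + 1), ∏ j ∈ Finset.Ioi i, (-1 : ℚ) = (-1) ^ ((s + 1) * (s + 1 - 1) / 2) := by
  simp only [Finset.prod_const, Fin.card_Ioi]
  rw [Finset.prod_pow_eq_pow_sum,
    Fin.sum_univ_eq_sum_range (fun i => s + 1 - 1 - i) (s + 1),
    Finset.sum_range_reflect (fun i => i) (s + 1), Finset.sum_range_id]

lemma hp_det (n s k : ℕ) :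
    hankelPascal k (n + s) (s + 1) = (-1) ^ ((s + 1) * (s + 1 - 1) / 2) *
      (((∏ j : Fin (s + 1), ((n + j).factorial : ℚ)⁻¹) *
        ∏ i : Fin (s + 1), ∏ j ∈ Finset.Ioi i, ((j : ℚ) - (i : ℚ))) *
      ∏ i ∈ Finset.range (s + 1), ∏ l ∈ Finset.range n, ((k : ℚ) + i - l)) := by
  have e1 : (Matrix.of fun i j : Fin (s + 1) => ((k + i.1 + j.1).choose (n + s) : ℚ)) =
      (Matrix.of fun i l : Fin (s + 1) => ((k + i.1).choose (n + s - l) : ℚ)) *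
      (Matrix.of fun l j : Fin (s + 1) => ((j : ℕ).choose l : ℚ)) := by
    ext i j
    rw [Matrix.mul_apply]
    simp only [Matrix.of_apply]
    rw [hp_vand _ _ _ _ (by omega)]
    push_cast
    rfl
  have e2 : (Matrix.of fun l j : Fin (s + 1) => ((j : ℕ).choose l : ℚ)).det = 1 := by
    rw [Matrix.det_of_isUpperTriangular]
    · simp
    · intro i j hij
      simp only [Matrix.of_apply]
      have : (j : ℕ) < i := hij
      rw [Nat.choose_eq_zero_of_lt this]; simp
  rw [hankelPascal, e1, Matrix.det_mul, e2, mul_one, ← Matrix.det_submatrix_equiv_self Fin.revPerm]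
  have e3 : (Matrix.of fun i l : Fin (s + 1) => ((k + i.1).choose (n + s - l) : ℚ)).submatrix
      Fin.revPerm Fin.revPerm = Matrix.of fun i l : Fin (s + 1) =>
        (∏ t ∈ Finset.range n, ((k : ℚ) + (s - i : ℕ) - t)) *
        (Matrix.of fun i l : Fin (s + 1) => ((n + l).factorial : ℚ)⁻¹ *
          (Matrix.of fun i l : Fin (s + 1) =>
            (descPochhammer ℚ l).eval ((k : ℚ) + (s - i : ℕ) - n)) i l) i l := by
    ext i l
    simp only [Matrix.submatrix_apply, Matrix.of_apply, Fin.revPerm_apply, Fin.val_rev]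
    have a1 : n + s - (s + 1 - (l + 1)) = n + l := by omega
    have a2 : s + 1 - ((i : ℕ) + 1) = s - i := by omega
    rw [a1, a2, hp_choose_split]
    push_cast
    rfl
  rw [e3, Matrix.det_mul_column, Matrix.det_mul_row,
    ← Matrix.det_eval_matrixOfPolynomials_eq_det_vandermonde
      (fun i : Fin (s + 1) => (k : ℚ) + (s - i : ℕ) - n) (fun l => descPochhammer ℚ l)
      (fun l => descPochhammer_natDegree ℚ _) (fun l => monic_descPochhammer ℚ _),
    Matrix.det_vandermonde, ← hp_sign]
  have e4 : ∏ i : Fin (s + 1), ∏ j ∈ Finset.Ioi i, (((k : ℚ) + (s - j : ℕ) - n) -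
      ((k : ℚ) + (s - i : ℕ) - n)) = (∏ i : Fin (s + 1), ∏ j ∈ Finset.Ioi i, (-1 : ℚ)) *
      ∏ i : Fin (s + 1), ∏ j ∈ Finset.Ioi i, ((j : ℚ) - (i : ℚ)) := by
    rw [← Finset.prod_mul_distrib]
    refine Finset.prod_congr rfl fun i _ => ?_
    rw [← Finset.prod_mul_distrib]
    refine Finset.prod_congr rfl fun j _ => ?_
    rw [Nat.cast_sub (by omega), Nat.cast_sub (by omega)]
    ring
  have e5 : ∏ i : Fin (s + 1), (∏ t ∈ Finset.range n, ((k : ℚ) + (s - i : ℕ) - t)) =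
      ∏ i ∈ Finset.range (s + 1), ∏ l ∈ Finset.range n, ((k : ℚ) + i - l) := by
    rw [Fin.prod_univ_eq_prod_range
      (fun i => ∏ t ∈ Finset.range n, ((k : ℚ) + (s - i : ℕ) - t)) (s + 1)]
    exact Finset.prod_range_reflect
      (fun i => ∏ t ∈ Finset.range n, ((k : ℚ) + (i : ℕ) - t)) (s + 1)
  rw [e4, e5]
  ring

lemma hp_int (k m r : ℕ) : ∃ z : ℤ, hankelPascal k m r = z := by
  refine ⟨(Matrix.of fun i j : Fin r => ((k + i.1 + j.1).choose m : ℤ)).det, ?_⟩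
  rw [hankelPascal, ← eq_intCast (Int.castRingHom ℚ), RingHom.map_det]
  congr 1

lemma hp_prod' (s n : ℕ) : ∃ b : ℕ, (s + 1) * n ≤ n + b + s * (n - 1) ∧
    hpGood (fun k => ∏ i ∈ Finset.range (s + 1), ∏ l ∈ Finset.range n,
      ((k : ℚ) + i - l)) ((s + 1) * n) n b := by
  cases n with
  | zero => exact ⟨0, by simp, by simpa using hp_base⟩
  | succ n => exact ⟨s, by simp; ring_nf; rfl, hp_prod s n⟩

open PowerSeries in
lemma hp_main (s n : ℕ) :
    ∃ A : Polynomial ℕ, A.natDegree ≤ s * (n - 1) ∧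
      (1 - PowerSeries.X) ^ ((s + 1) * n + 1) *
          PowerSeries.mk (fun k => hankelPascal k (n + s) (s + 1)) =
        (-1 : PowerSeries ℚ) ^ ((s + 1) * (s + 1 - 1) / 2) * PowerSeries.X ^ n *
          ((A.map (Nat.castRingHom ℚ)) : PowerSeries ℚ) := by
  obtain ⟨b, hb, hg⟩ := hp_prod' s n
  set f : ℕ → ℚ := fun k => ∏ i ∈ Finset.range (s + 1), ∏ l ∈ Finset.range n,
      ((k : ℚ) + i - l) with hf
  set c : ℚ := (∏ j : Fin (s + 1), ((n + j).factorial : ℚ)⁻¹) *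
        ∏ i : Fin (s + 1), ∏ j ∈ Finset.Ioi i, ((j : ℚ) - (i : ℚ)) with hc
  have hc0 : 0 ≤ c := by
    refine mul_nonneg (Finset.prod_nonneg fun j _ => by positivity)
      (Finset.prod_nonneg fun i _ => Finset.prod_nonneg fun j hj => ?_)
    have : i < j := Finset.mem_Ioi.mp hj
    have : (i : ℚ) < (j : ℚ) := by exact_mod_cast this
    linarith
  set E := (s + 1) * (s + 1 - 1) / 2 with hE
  set Q : PowerSeries ℚ := (1 - X) ^ ((s + 1) * n + 1) * PowerSeries.mk f with hQ
  have hmk : PowerSeries.mk (fun k => hankelPascal k (n + s) (s + 1)) =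
      (-1) ^ E * (C c * PowerSeries.mk f) := by
    have : ((-1) ^ E : PowerSeries ℚ) = C ((-1) ^ E) := by simp
    rw [this]
    ext k
    rw [coeff_C_mul, coeff_C_mul, coeff_mk, coeff_mk, hp_det]
  clear_value c
  have hs : ((-1) ^ E : PowerSeries ℚ) * (-1) ^ E = 1 := by
    rw [← mul_pow]; simp
  -- integrality
  have hint : ∀ j, ∃ z : ℕ, coeff j (C c * Q) = z := by
    intro j
    choose z hz using fun k => hp_int k (n + s) (s + 1)
    have h1 : C c * Q = PowerSeries.map (Int.castRingHom ℚ)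
        ((-1) ^ E * ((1 - X) ^ ((s + 1) * n + 1) * PowerSeries.mk z)) := by
      have h2 : PowerSeries.map (Int.castRingHom ℚ) (PowerSeries.mk z) =
          PowerSeries.mk (fun k => hankelPascal k (n + s) (s + 1)) := by
        ext k; simp [hz]
      rw [map_mul, map_mul, h2, hmk]
      simp only [map_pow, map_sub, map_neg, map_one, PowerSeries.map_X]
      linear_combination (- C c * Q) * hs
    have h3 : 0 ≤ coeff j (C c * Q) := by
      rw [coeff_C_mul]; exact mul_nonneg hc0 (hg j).1
    rw [h1, coeff_map] at h3 ⊢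
    have h4 : 0 ≤ coeff j ((-1) ^ E * ((1 - X) ^ ((s + 1) * n + 1) * PowerSeries.mk z)) := by
      simpa using h3
    obtain ⟨w, hw⟩ := Int.eq_ofNat_of_zero_le h4
    exact ⟨w, by rw [hw]; simp⟩
  choose w hw using hint
  have hsupp : ∀ j, ¬ (n ≤ j ∧ j + b ≤ (s + 1) * n) → coeff j (C c * Q) = 0 := by
    intro j hj
    rw [coeff_C_mul]
    by_contra hne
    exact hj ((hg j).2 (right_ne_zero_of_mul hne))
  refine ⟨∑ i ∈ Finset.range (s * (n - 1) + 1), Polynomial.monomial i (w (i + n)), ?_, ?_⟩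
  · refine Polynomial.natDegree_sum_le_of_forall_le _ _ fun i hi => ?_
    refine (Polynomial.natDegree_monomial_le _).trans ?_
    simp at hi; omega
  · have key : C c * Q = X ^ n * (((∑ i ∈ Finset.range (s * (n - 1) + 1),
        Polynomial.monomial i (w (i + n))).map (Nat.castRingHom ℚ) : Polynomial ℚ) :
          PowerSeries ℚ) := by
      ext j
      rw [coeff_X_pow_mul', Polynomial.coeff_coe, Polynomial.coeff_map, Polynomial.finsetSum_coeff]
      simp only [Polynomial.coeff_monomial, Finset.sum_ite_eq', Finset.mem_range]
      split_ifs with h1 h2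
      · rw [hw, Nat.sub_add_cancel h1]; simp
      · rw [hsupp _ (by omega)]; simp
      · exact hsupp _ (by omega)
    rw [hmk, mul_assoc, ← key, hQ]
    ring

/-- For `r ≥ 1` and `m ≥ r - 1`, there is a polynomial `A` with nonnegative integer
coefficients, of degree at most `(r-1)(m-r)`, such that
`(1-x)^{r(m-r+1)+1} ∑_{k≥0} d_k(m,r) x^k = (-1)^{r(r-1)/2} x^{m-r+1} A(x)`
as formal power series over `ℚ`. -/
theorem genFun_hankel_det_pascal_column (r m : ℕ) (hr : 1 ≤ r) (hm : r - 1 ≤ m) :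
    ∃ A : Polynomial ℕ, A.natDegree ≤ (r - 1) * (m - r) ∧
      (1 - PowerSeries.X) ^ (r * (m + 1 - r) + 1) *
          PowerSeries.mk (fun k => hankelPascal k m r) =
        (-1 : PowerSeries ℚ) ^ (r * (r - 1) / 2) * PowerSeries.X ^ (m + 1 - r) *
          ((A.map (Nat.castRingHom ℚ)) : PowerSeries ℚ) := by
  obtain ⟨s, rfl⟩ : ∃ s, r = s + 1 := ⟨r - 1, by omega⟩
  obtain ⟨n, rfl⟩ : ∃ n, m = n + s := ⟨m - s, by omega⟩
  have h := hp_main s n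
  have a1 : n + s + 1 - (s + 1) = n := by omega
  have a2 : n + s - (s + 1) = n - 1 := by omega
  have a3 : s + 1 - 1 = s := by omega
  rw [a1, a2]
  rw [a3] at h ⊢
  exact h
end

section
/- For all integers r ≥ 1 and s ≥ 1, the formal power series (1-x)^{rs+1} · ∑_{k≥0} ⟨k+s choose s⟩_r x^k over ℚ is a polynomial of degree at most (r-1)(s-1) with nonnegative integer coefficients (these coefficients are Sulanke's r-dimensional Narayana numbers N(r, s, j)). -/
open PowerSeries in
def HGood (d m : ℕ) (p : ℕ → ℚ) : Prop :=
  (∀ j, 0 ≤ coeff j ((1 - X : PowerSeries ℚ) ^ (d + 1) * mk p)) ∧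
  (∀ j, d < j + m → coeff j ((1 - X : PowerSeries ℚ) ^ (d + 1) * mk p) = 0)

open PowerSeries in
theorem HGood.scale {d m : ℕ} {p : ℕ → ℚ} (h : HGood d m p) (c : ℚ) (hc : 0 ≤ c) :
    HGood d m (fun k => c * p k) := by
  have e : (mk fun k => c * p k) = C c * mk p := by
    ext n; simp
  have e2 : ∀ j, coeff j ((1 - X : PowerSeries ℚ) ^ (d + 1) * mk (fun k => c * p k)) =
      c * coeff j ((1 - X : PowerSeries ℚ) ^ (d + 1) * mk p) := by
    intro j
    rw [e, mul_left_comm, coeff_C_mul]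
  refine ⟨fun j => ?_, fun j hj => ?_⟩
  · rw [e2]; exact mul_nonneg hc (h.1 j)
  · rw [e2, h.2 j hj, mul_zero]

open PowerSeries in
theorem HGood.key (d a : ℕ) (p : ℕ → ℚ) :
    (1 - X : PowerSeries ℚ) ^ (d + 2) * mk (fun k => ((k : ℚ) + a) * p k) =
      (1 - X) * (X * d⁄dX ℚ ((1 - X : PowerSeries ℚ) ^ (d + 1) * mk p)) +
      ((d : PowerSeries ℚ) + 1) * (X * ((1 - X : PowerSeries ℚ) ^ (d + 1) * mk p)) +
      (a : PowerSeries ℚ) * ((1 - X) * ((1 - X : PowerSeries ℚ) ^ (d + 1) * mk p)) := by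
  have e : (mk fun k => ((k : ℚ) + a) * p k) = X * d⁄dX ℚ (mk p) + (a : PowerSeries ℚ) * mk p := by
    ext n
    rw [← map_natCast (C (R := ℚ)) a, map_add, coeff_C_mul]
    cases n with
    | zero => simp
    | succ n => rw [coeff_succ_X_mul]; simp [coeff_derivative]; ring
  rw [e, Derivation.leibniz, Derivation.leibniz_pow]
  simp only [map_sub, Derivation.map_one_eq_zero, derivative_X, smul_eq_mul, nsmul_eq_mul]
  push_cast
  ring_nf

open PowerSeries in
theorem HGood.step {d m : ℕ} {p : ℕ → ℚ} (h : HGood d m p) (a : ℕ) (ha : a ≤ m + 1) :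
    HGood (d + 1) (max m a) (fun k => ((k : ℚ) + a) * p k) := by
  obtain ⟨h1, h2⟩ := h
  have k := HGood.key d a p
  unfold HGood
  rw [show d + 1 + 1 = d + 2 from rfl, k]
  generalize (1 - X : PowerSeries ℚ) ^ (d + 1) * mk p = H at *
  have hXd : ∀ n, coeff n (X * d⁄dX ℚ H) = n * coeff n H := by
    intro n
    cases n with
    | zero => simp
    | succ n => rw [coeff_succ_X_mul, coeff_derivative]; push_cast; ring
  have hd1 : ((d : PowerSeries ℚ) + 1) = C ((d : ℚ) + 1) := by simp
  rw [hd1, ← map_natCast (C (R := ℚ)) a]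
  have c0 : coeff 0 ((1 - X) * (X * d⁄dX ℚ H) + C ((d : ℚ) + 1) * (X * H) +
      C (a : ℚ) * ((1 - X) * H)) = a * coeff 0 H := by
    simp
  have cs : ∀ n, coeff (n + 1) ((1 - X) * (X * d⁄dX ℚ H) + C ((d : ℚ) + 1) * (X * H) +
      C (a : ℚ) * ((1 - X) * H)) =
      ((n : ℚ) + 1 + a) * coeff (n + 1) H + ((d : ℚ) + 1 - n - a) * coeff n H := by
    intro n
    simp only [map_add (coeff (n + 1)), coeff_C_mul, sub_mul, one_mul, map_sub, coeff_succ_X_mul, hXd]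
    push_cast
    ring
  constructor
  · intro j
    cases j with
    | zero => rw [c0]; exact mul_nonneg (by positivity) (h1 0)
    | succ n =>
      rw [cs]
      refine add_nonneg (mul_nonneg (by positivity) (h1 _)) ?_
      by_cases hn : d < n + m
      · rw [h2 n hn, mul_zero]
      · refine mul_nonneg ?_ (h1 n)
        have : n + a ≤ d + 1 := by omega
        have : (n : ℚ) + a ≤ d + 1 := by exact_mod_cast this
        linarith
  · intro j hj
    cases j with
    | zero =>
      rw [c0]
      rw [h2 0 (by omega), mul_zero]
    | succ n =>
      rw [cs, h2 (n + 1) (by omega), mul_zero, zero_add]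
      by_cases hn : d < n + m
      · rw [h2 n hn, mul_zero]
      · have : d + 1 = n + a := by omega
        have : (d : ℚ) + 1 = n + a := by exact_mod_cast this
        rw [show (d : ℚ) + 1 - n - a = 0 by linarith, zero_mul]

theorem HGood.block {d m : ℕ} {p : ℕ → ℚ} (h : HGood d m p) (r : ℕ) (hr : r ≤ m) (t : ℕ) :
    HGood (d + t) (max m (r + t)) (fun k => ((k + r + 1).ascFactorial t : ℚ) * p k) := by
  induction t with
  | zero => simpa [hr] using h
  | succ t ih =>
    have := ih.step (r + t + 1) (by omega)
    have e : max (max m (r + t)) (r + t + 1) = max m (r + (t + 1)) := by omega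
    rw [e] at this
    have e2 : (fun k : ℕ => ((k + r + 1).ascFactorial (t + 1) : ℚ) * p k) =
        fun k : ℕ => ((k : ℚ) + (r + t + 1 : ℕ)) * (((k + r + 1).ascFactorial t : ℚ) * p k) := by
      funext k
      rw [Nat.ascFactorial_succ]
      push_cast
      ring
    rw [e2]
    exact this

theorem HGood.block' {d m : ℕ} {p : ℕ → ℚ} (h : HGood d m p) (r : ℕ) (hr : r ≤ m) (s : ℕ) :
    HGood (d + s) (max m (r + s))
      (fun k => p k * (((k + s + r).choose s : ℚ) / ((s + r).choose s : ℚ))) := by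
  have := (h.block r hr s).scale (((s.factorial : ℚ) * ((s + r).choose s : ℚ))⁻¹) (by positivity)
  convert this using 2 with k
  have hc : ((s + r).choose s : ℚ) ≠ 0 := by
    exact_mod_cast (Nat.choose_pos (by omega)).ne'
  have hf : (s.factorial : ℚ) ≠ 0 := by exact_mod_cast s.factorial_ne_zero
  have e := Nat.ascFactorial_eq_factorial_mul_choose (k + r) s
  rw [e, show k + r + s = k + s + r by ring]
  push_cast
  field_simp

theorem hoggatt_good (r s : ℕ) (hr : 1 ≤ r) (hs : 1 ≤ s) :
    HGood (r * s) (r + s - 1) (fun k => hoggatt r (k + s) s) := by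
  have step : ∀ r, (fun k => hoggatt (r + 1) (k + s) s) = fun k => hoggatt r (k + s) s *
      (((k + s + r).choose s : ℚ) / ((s + r).choose s : ℚ)) := by
    intro r; funext k; simp only [hoggatt, Finset.prod_range_succ]
  induction r, hr using Nat.le_induction with
  | base =>
    have h0 : HGood 0 0 (fun k => hoggatt 0 (k + s) s) := by
      have : (1 - PowerSeries.X : PowerSeries ℚ) ^ (0 + 1) *
          PowerSeries.mk (fun k => hoggatt 0 (k + s) s) = 1 := by
        have := PowerSeries.mk_one_mul_one_sub_eq_one ℚ
        rw [mul_comm, zero_add, pow_one]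
        refine Eq.trans ?_ this
        congr 1
      unfold HGood
      rw [this]
      refine ⟨fun j => ?_, fun j hj => ?_⟩
      · rw [PowerSeries.coeff_one]; split_ifs <;> norm_num
      · rw [PowerSeries.coeff_one, if_neg (by omega)]
    have := h0.block' 0 le_rfl s
    rw [← step 0] at this
    convert this using 1 <;> simp
  | succ r hr ih =>
    have := ih.block' r (by omega) s
    rw [← step r] at this
    convert this using 1
    · ring
    · omega

theorem vdm_succ (v : ℕ → ℤ) (n : ℕ) :
    (Matrix.vandermonde (fun i : Fin (n + 1) => v i)).det =
      (Matrix.vandermonde (fun i : Fin n => v i)).det * ∏ i ∈ Finset.range n, (v n - v i) := by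
  have key : ∀ n, (Matrix.vandermonde (fun i : Fin n => v i)).det =
      ∏ j ∈ Finset.range n, ∏ i ∈ Finset.range j, (v j - v i) := by
    intro n
    rw [Matrix.det_vandermonde]
    rw [Finset.prod_comm' (t' := Finset.univ) (s' := fun j => Finset.Iio j) (by simp)]
    rw [← Fin.prod_univ_eq_prod_range (fun j => ∏ i ∈ Finset.range j, (v j - v i))]
    refine Finset.prod_congr rfl fun j _ => ?_
    refine Finset.prod_bij (fun i _ => (i : ℕ)) ?_ ?_ ?_ ?_
    · intro i hi; simpa using hi
    · intro a _ b _ h; exact Fin.ext h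
    · intro b hb
      have hb' := Finset.mem_range.1 hb
      exact ⟨⟨b, hb'.trans j.2⟩, by simpa [Fin.lt_def] using hb', rfl⟩
    · intro i _; rfl
  rw [key, key, Finset.prod_range_succ]

theorem hoggatt_succ (r s k : ℕ) : hoggatt r (k + (s + 1)) (s + 1) =
    hoggatt r (k + s) s * ∏ j ∈ Finset.range r, (((k + s + 1 + j : ℕ) : ℚ) / ((s + 1 + j : ℕ) : ℚ)) := by
  unfold hoggatt
  rw [← Finset.prod_mul_distrib]
  refine Finset.prod_congr rfl fun j _ => ?_
  have e1 := Nat.add_one_mul_choose_eq (k + s + j) s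
  have e2 := Nat.add_one_mul_choose_eq (s + j) s
  rw [show k + (s + 1) + j = k + s + j + 1 by ring, show s + 1 + j = s + j + 1 by ring,
    show k + s + 1 + j = k + s + j + 1 by ring]
  have hc : ((s + j).choose s : ℚ) ≠ 0 := by
    exact_mod_cast (Nat.choose_pos (by omega)).ne'
  have hc' : ((s + j + 1).choose (s + 1) : ℚ) ≠ 0 := by
    exact_mod_cast (Nat.choose_pos (by omega)).ne'
  have hq : ((s + j + 1 : ℕ) : ℚ) ≠ 0 := by positivity
  have hq2 : ((s + 1 : ℕ) : ℚ) ≠ 0 := by positivity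
  have e1' : ((k + s + j + 1 : ℕ) : ℚ) * ((k + s + j).choose s : ℚ) =
    ((k + s + j + 1).choose (s + 1) : ℚ) * ((s + 1 : ℕ) : ℚ) := by exact_mod_cast e1
  have e2' : ((s + j + 1 : ℕ) : ℚ) * ((s + j).choose s : ℚ) =
    ((s + j + 1).choose (s + 1) : ℚ) * ((s + 1 : ℕ) : ℚ) := by exact_mod_cast e2
  rw [div_mul_div_comm, div_eq_div_iff hc' (mul_ne_zero hc hq)]
  apply mul_right_cancel₀ hq2
  linear_combination (-(((s + j).choose s : ℚ) * ((s + j + 1 : ℕ) : ℚ))) * e1' + (((k + s + j + 1 : ℕ) : ℚ) * ((k + s + j).choose s : ℚ)) * e2'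

theorem prod_fact (n : ℕ) : ∀ s : ℕ, (∏ j ∈ Finset.range n, ((s + 1 + j : ℕ) : ℚ)) * s.factorial =
    (s + n).factorial := by
  induction n with
  | zero => simp
  | succ n ih =>
    intro s
    rw [Finset.prod_range_succ, mul_right_comm, ih, ← add_assoc, Nat.factorial_succ]
    push_cast; ring

def hvec (r k : ℕ) (i : ℕ) : ℤ := if i < r then i else i + k

theorem prod_desc (n : ℕ) : (∏ i ∈ Finset.range n, ((n : ℤ) - i)) = n.factorial := by
  rw [← Finset.prod_range_reflect, ← Finset.prod_range_add_one_eq_factorial]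
  push_cast
  refine Finset.prod_congr rfl fun i hi => ?_
  have := Finset.mem_range.1 hi
  omega

theorem vdm_base (r k : ℕ) : ∀ n ≤ r,
    (Matrix.vandermonde (fun i : Fin n => hvec r k i)).det = ∏ i ∈ Finset.range n, (i.factorial : ℤ) := by
  intro n
  induction n with
  | zero => simp
  | succ n ih =>
    intro hn
    rw [vdm_succ, ih (by omega), Finset.prod_range_succ, ← prod_desc n]
    congr 1
    refine Finset.prod_congr rfl fun i hi => ?_
    have := Finset.mem_range.1 hi
    simp only [hvec]
    rw [if_pos (by omega), if_pos (by omega)]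

theorem vdm_eq (r k s : ℕ) :
    ((Matrix.vandermonde (fun i : Fin (r + s) => hvec r k i)).det : ℚ) =
      (∏ i ∈ Finset.range (r + s), (i.factorial : ℚ)) * hoggatt r (k + s) s := by
  induction s with
  | zero =>
    have := vdm_base r k r le_rfl
    simp only [Nat.add_zero]
    rw [this]; simp [hoggatt]
  | succ s ih =>
    rw [show r + (s + 1) = r + s + 1 from rfl, vdm_succ, Int.cast_mul, ih, Finset.prod_range_succ,
      hoggatt_succ, Finset.prod_range_add]
    have a1 : (∏ i ∈ Finset.range r, (hvec r k (r + s) - hvec r k i) : ℤ) =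
        ∏ i ∈ Finset.range r, ((k + s + 1 + i : ℕ) : ℤ) := by
      rw [← Finset.prod_range_reflect]
      refine Finset.prod_congr rfl fun i hi => ?_
      have := Finset.mem_range.1 hi
      simp only [hvec]
      rw [if_neg (by omega), if_pos (by omega)]
      omega
    have a2 : (∏ i ∈ Finset.range s, (hvec r k (r + s) - hvec r k (r + i)) : ℤ) = s.factorial := by
      rw [← prod_desc s]
      refine Finset.prod_congr rfl fun i hi => ?_
      simp only [hvec]
      rw [if_neg (by omega), if_neg (by omega)]
      push_cast; ring
    rw [Finset.prod_range_add, a1, a2]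
    have b := prod_fact r s
    have hne : (∏ j ∈ Finset.range r, ((s + 1 + j : ℕ) : ℚ)) ≠ 0 :=
      Finset.prod_ne_zero_iff.2 fun j _ => by positivity
    rw [Finset.prod_div_distrib, show r + s = s + r by ring, ← b, Int.cast_mul, Int.cast_prod]
    simp only [Int.cast_natCast]
    field_simp

theorem hoggatt_int (r s k : ℕ) (hr : 1 ≤ r) : ∃ z : ℤ, hoggatt r (k + s) s = z := by
  obtain ⟨n, hn⟩ : ∃ n, r + s = n + 1 := ⟨r + s - 1, by omega⟩
  have h := vdm_eq r k s
  rw [hn] at h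
  obtain ⟨z, hz⟩ := Matrix.superFactorial_dvd_vandermonde_det (fun i : Fin (n + 1) => hvec r k i)
  refine ⟨z, ?_⟩
  have e : (∏ i ∈ Finset.range (n + 1), (i.factorial : ℚ)) = (n.superFactorial : ℚ) := by
    clear hz h hn
    induction n with
    | zero => simp
    | succ n ih =>
      rw [Finset.prod_range_succ, ih, Nat.superFactorial_succ]
      push_cast
      ring
  rw [hz, e] at h
  have hne : (n.superFactorial : ℚ) ≠ 0 := by
    rw [← e]
    exact Finset.prod_ne_zero_iff.2 fun j _ => by positivity
  push_cast at h
  exact (mul_left_cancel₀ hne h).symm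

theorem genFun_hoggatt_column_is_narayana_poly (r s : ℕ) (hr : 1 ≤ r) (hs : 1 ≤ s) :
    ∃ A : Polynomial ℕ, A.natDegree ≤ (r - 1) * (s - 1) ∧
      (1 - PowerSeries.X) ^ (r * s + 1) *
          PowerSeries.mk (fun k => hoggatt r (k + s) s) =
        ((A.map (Nat.castRingHom ℚ)) : PowerSeries ℚ) := by
  obtain ⟨h1, h2⟩ := hoggatt_good r s hr hs
  choose q hq using fun k => hoggatt_int r s k hr
  have hmap : (1 - PowerSeries.X : PowerSeries ℚ) ^ (r * s + 1) *
          PowerSeries.mk (fun k => hoggatt r (k + s) s) =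
      PowerSeries.map (Int.castRingHom ℚ) ((1 - PowerSeries.X) ^ (r * s + 1) * PowerSeries.mk q) := by
    rw [map_mul, map_pow, map_sub, map_one, PowerSeries.map_X]
    congr 1
    ext n
    simp [hq]
  rw [hmap] at h1 h2 ⊢
  generalize (1 - PowerSeries.X : PowerSeries ℤ) ^ (r * s + 1) * PowerSeries.mk q = Q at *
  simp only [PowerSeries.coeff_map, eq_intCast, Int.cast_nonneg_iff, Int.cast_eq_zero] at h1 h2
  have hdeg : ∀ j, (r - 1) * (s - 1) < j → PowerSeries.coeff j Q = 0 := by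
    intro j hj
    apply h2
    obtain ⟨a, rfl⟩ : ∃ a, r = a + 1 := ⟨r - 1, by omega⟩
    obtain ⟨b, rfl⟩ : ∃ b, s = b + 1 := ⟨s - 1, by omega⟩
    simp only [Nat.add_sub_cancel] at hj
    have : (a + 1) * (b + 1) = a * b + a + b + 1 := by ring
    omega
  set A : Polynomial ℕ := ∑ j ∈ Finset.range ((r - 1) * (s - 1) + 1),
    Polynomial.monomial j (PowerSeries.coeff j Q).toNat with hA
  have hc : ∀ j, A.coeff j = (PowerSeries.coeff j Q).toNat := by
    intro j
    rw [hA, Polynomial.finsetSum_coeff]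
    simp only [Polynomial.coeff_monomial, Finset.sum_ite_eq', Finset.mem_range]
    split_ifs with h
    · rfl
    · rw [hdeg j (by omega)]; rfl
  refine ⟨A, ?_, ?_⟩
  · rw [Polynomial.natDegree_le_iff_coeff_eq_zero]
    intro j hj
    rw [hc, hdeg j hj]; rfl
  · ext j
    rw [PowerSeries.coeff_map, Polynomial.coeff_coe, Polynomial.coeff_map, hc]
    simp only [eq_intCast, eq_natCast]
    have := Int.toNat_of_nonneg (h1 j)
    exact_mod_cast this.symm
end

section
/- For all integers r ≥ 1 and s ≥ 1, if A is the polynomial over ℚ such that, as formal power series, (1-x)^{rs+1} · ∑_{k≥0} ⟨k+s choose s⟩_r x^k = A(x), then A(1) equals the r-dimensional Catalan number C_{r,s} = (rs)! · ∏_{j=0}^{r-1} j!/(s+j)!. -/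
def NarP (d : ℕ) (L : ℚ) (f : ℕ → ℚ) : Prop :=
  ∃ B : Polynomial ℚ, (1 - PowerSeries.X) ^ (d + 1) * PowerSeries.mk f = (B : PowerSeries ℚ) ∧
    B.eval 1 = (d.factorial : ℚ) * L

lemma narP_zero : NarP 0 1 (fun _ => 1) := by
  refine ⟨1, ?_, by simp⟩
  have := PowerSeries.mk_one_mul_one_sub_eq_one ℚ
  rw [mul_comm] at this
  rw [zero_add, pow_one, Polynomial.coe_one]
  exact this

lemma narP_scale {d L f} (c : ℚ) (h : NarP d L f) : NarP d (L * c) (fun k => f k * c) := by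
  obtain ⟨B, h1, h2⟩ := h
  refine ⟨B * Polynomial.C c, ?_, by simp [h2, mul_assoc]⟩
  have : PowerSeries.mk (fun k => f k * c) = PowerSeries.mk f * PowerSeries.C c := by
    ext n; simp
  rw [this, ← mul_assoc, h1]; simp

lemma narP_lin {d L f} (b : ℚ) (h : NarP d L f) :
    NarP (d + 1) L (fun k => f k * ((k : ℚ) + b)) := by
  obtain ⟨B, h1, h2⟩ := h
  refine ⟨Polynomial.X * ((1 - Polynomial.X) * Polynomial.derivative B
      + ((d : Polynomial ℚ) + 1) * B) + Polynomial.C b * (1 - Polynomial.X) * B, ?_, ?_⟩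
  · have e : PowerSeries.mk (fun k => f k * ((k : ℚ) + b)) =
        PowerSeries.X * PowerSeries.derivative ℚ (PowerSeries.mk f)
          + PowerSeries.C b * PowerSeries.mk f := by
      ext n
      cases n with
      | zero => simp [mul_comm]
      | succ n => simp [PowerSeries.coeff_succ_X_mul, PowerSeries.coeff_derivative]; ring
    have h3 := congrArg (PowerSeries.derivative ℚ) h1
    rw [Derivation.leibniz, Derivation.leibniz_pow, PowerSeries.derivative_coe] at h3
    simp only [map_sub, Derivation.map_one_eq_zero, PowerSeries.derivative_X, smul_eq_mul,
      nsmul_eq_mul, Nat.add_sub_cancel] at h3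
    push_cast at h3
    have hd : (((d : Polynomial ℚ)) : PowerSeries ℚ) = (d : PowerSeries ℚ) :=
      map_natCast (Polynomial.coeToPowerSeries.ringHom (R := ℚ)) d
    rw [e]
    simp only [Polynomial.coe_add, Polynomial.coe_mul, Polynomial.coe_sub, Polynomial.coe_one,
      Polynomial.coe_X, Polynomial.coe_C, hd, ← h3, ← h1]
    ring
  · simp [h2, Nat.factorial_succ]; ring

lemma narP_asc {d L f} (j s : ℕ) (h : NarP d L f) :
    NarP (d + s) L (fun k => f k * ((k + j + 1).ascFactorial s : ℚ)) := by
  induction s with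
  | zero => simpa using h
  | succ s ih =>
    have := narP_lin ((j : ℚ) + 1 + s) ih
    rw [← add_assoc]
    convert this using 2 with k
    rw [Nat.ascFactorial_succ]; push_cast; ring

lemma narP_main (r s : ℕ) : NarP (r * s)
    (∏ j ∈ Finset.range r, (j.factorial : ℚ) / ((s + j).factorial : ℚ))
    (fun k => hoggatt r (k + s) s) := by
  induction r with
  | zero => simpa [hoggatt] using narP_zero
  | succ r ih =>
    have := narP_scale ((r.factorial : ℚ) / ((s + r).factorial : ℚ)) (narP_asc r s ih)
    rw [Finset.prod_range_succ, Nat.succ_mul]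
    convert this using 2 with k
    simp only [hoggatt]
    rw [Finset.prod_range_succ, mul_assoc]
    congr 1
    have h1 := Nat.ascFactorial_eq_factorial_mul_choose (k + r) s
    have h2 := Nat.add_choose_mul_factorial_mul_factorial s r
    rw [← Nat.choose_symm_add] at h2
    have h3 : (s + r).choose s ≠ 0 := (Nat.choose_pos (by omega)).ne'
    have h5 : (s.factorial : ℚ) ≠ 0 := by positivity
    have h6 : (r.factorial : ℚ) ≠ 0 := by positivity
    have h4 : ((s + r).choose s : ℚ) ≠ 0 := by exact_mod_cast h3
    rw [h1, ← h2, show k + s + r = k + r + s by ring]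
    push_cast
    field_simp

/-- For `r, s ≥ 1`, if `A` is the polynomial over `ℚ` with
`(1-x)^{rs+1} ∑_{k≥0} ⟨k+s choose s⟩_r x^k = A(x)` as formal power series, then
`A(1)` equals the `r`-dimensional Catalan number `C_{r,s} = (rs)! ∏_{j=0}^{r-1} j!/(s+j)!`. -/
theorem narayana_poly_eval_one_eq_catalan (r s : ℕ) (hr : 1 ≤ r) (hs : 1 ≤ s)
    (A : Polynomial ℚ)
    (hA : (1 - PowerSeries.X) ^ (r * s + 1) *
        PowerSeries.mk (fun k => hoggatt r (k + s) s) = (A : PowerSeries ℚ)) :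
    A.eval 1 = ((r * s).factorial : ℚ) *
      ∏ j ∈ Finset.range r, (j.factorial : ℚ) / ((s + j).factorial : ℚ) := by
  obtain ⟨B, h1, h2⟩ := narP_main r s
  rw [hA] at h1
  rw [Polynomial.coe_injective ℚ h1, h2]
end

section
/- Let R be a commutative ring, let a : ℕ → R be a sequence, and for integers k ≥ 0, n ≥ 0 let H(k, n) = det((a(k+i+j))_{i,j=0}^{n-1}) denote the n×n Hankel determinant of the shifted sequence (with H(k, 0) = 1). Then for every r ≥ 2 and every k ≥ 0, H(k, r)·H(k+2, r-2) - H(k+2, r-1)·H(k, r-1) + H(k+1, r-1)^2 = 0. -/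
open Matrix in
theorem aux_inv {m R : Type*} [Fintype m] [DecidableEq m] [CommRing R] (A : Matrix m m R)
    (hA : IsUnit A.det) (b c : Fin 2 → m → R) (d : Fin 2 → Fin 2 → R) :
    (fromBlocks A (of fun x j => b j x) (of fun i y => c i y) (of d)).det * A.det =
    (fromBlocks A (of fun x (_ : Unit) => b 0 x) (of fun (_ : Unit) y => c 0 y) (of fun _ _ => d 0 0)).det *
    (fromBlocks A (of fun x (_ : Unit) => b 1 x) (of fun (_ : Unit) y => c 1 y) (of fun _ _ => d 1 1)).det -
    (fromBlocks A (of fun x (_ : Unit) => b 1 x) (of fun (_ : Unit) y => c 0 y) (of fun _ _ => d 0 1)).det *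
    (fromBlocks A (of fun x (_ : Unit) => b 0 x) (of fun (_ : Unit) y => c 1 y) (of fun _ _ => d 1 0)).det := by
  have := A.invertibleOfIsUnitDet hA
  simp only [det_fromBlocks₁₁, det_fin_two, det_unique, Matrix.sub_apply, Matrix.mul_apply, of_apply]
  ring

open Matrix Polynomial in
theorem aux_gen {m R : Type*} [Fintype m] [DecidableEq m] [CommRing R] (A : Matrix m m R)
    (b c : Fin 2 → m → R) (d : Fin 2 → Fin 2 → R) :
    (fromBlocks A (of fun x j => b j x) (of fun i y => c i y) (of d)).det * A.det =
    (fromBlocks A (of fun x (_ : Unit) => b 0 x) (of fun (_ : Unit) y => c 0 y) (of fun _ _ => d 0 0)).det *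
    (fromBlocks A (of fun x (_ : Unit) => b 1 x) (of fun (_ : Unit) y => c 1 y) (of fun _ _ => d 1 1)).det -
    (fromBlocks A (of fun x (_ : Unit) => b 1 x) (of fun (_ : Unit) y => c 0 y) (of fun _ _ => d 0 1)).det *
    (fromBlocks A (of fun x (_ : Unit) => b 0 x) (of fun (_ : Unit) y => c 1 y) (of fun _ _ => d 1 0)).det := by
  let P : Matrix m m R[X] := charmatrix (-A)
  have hP : P.det.Monic := charpoly_monic (-A)
  let L := Localization.Away P.det
  have hinj : Function.Injective (algebraMap R[X] L) :=
    IsLocalization.injective L (M := Submonoid.powers P.det)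
      ((Submonoid.powers_le).2 hP.mem_nonZeroDivisors)
  have hu : IsUnit ((P.map (algebraMap R[X] L)).det) := by
    have h := IsLocalization.Away.algebraMap_isUnit (S := L) P.det
    rwa [RingHom.map_det] at h
  have key := aux_inv (P.map (algebraMap R[X] L)) hu
    (fun j x => algebraMap R[X] L (C (b j x))) (fun j x => algebraMap R[X] L (C (c j x)))
    (fun i j => algebraMap R[X] L (C (d i j)))
  have key2 : (fromBlocks P (of fun x j => C (b j x)) (of fun i y => C (c i y)) (of fun i j => C (d i j))).det * P.det =
    (fromBlocks P (of fun x (_ : Unit) => C (b 0 x)) (of fun (_ : Unit) y => C (c 0 y)) (of fun _ _ => C (d 0 0))).det *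
    (fromBlocks P (of fun x (_ : Unit) => C (b 1 x)) (of fun (_ : Unit) y => C (c 1 y)) (of fun _ _ => C (d 1 1))).det -
    (fromBlocks P (of fun x (_ : Unit) => C (b 1 x)) (of fun (_ : Unit) y => C (c 0 y)) (of fun _ _ => C (d 0 1))).det *
    (fromBlocks P (of fun x (_ : Unit) => C (b 0 x)) (of fun (_ : Unit) y => C (c 1 y)) (of fun _ _ => C (d 1 0))).det := by
    apply hinj
    simp only [map_mul, map_sub, RingHom.map_det, RingHom.mapMatrix_apply, fromBlocks_map]
    exact key
  have key3 := congrArg (evalRingHom (0 : R)) key2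
  have hPA : P.map (evalRingHom (0 : R)) = A := by
    ext i j
    by_cases h : i = j
    · subst h; simp [P]
    · simp [P, h]
  simp only [map_mul, map_sub, RingHom.map_det, RingHom.mapMatrix_apply, fromBlocks_map, hPA] at key3
  convert key3 using 5 <;> first | (congr 1 <;> (ext; simp)) | (congr 2 <;> (ext; simp))

def auxE0 (n : ℕ) : Fin n ⊕ Unit → Fin (n + 1) := Sum.elim Fin.succ (fun _ => 0)
def auxE1 (n : ℕ) : Fin n ⊕ Unit → Fin (n + 1) := Sum.elim Fin.castSucc (fun _ => Fin.last n)
def auxE2 (n : ℕ) : Fin n ⊕ Fin 2 → Fin (n + 2) :=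
  Sum.elim (fun i => i.castSucc.succ) (fun j => if j = 0 then 0 else Fin.last (n + 1))

theorem auxE0_bij (n : ℕ) : Function.Bijective (auxE0 n) := by
  rw [Fintype.bijective_iff_injective_and_card]
  refine ⟨?_, by simp⟩
  rintro (i | i) (j | j) h <;> simp_all [auxE0, Fin.ext_iff]

theorem auxE1_bij (n : ℕ) : Function.Bijective (auxE1 n) := by
  rw [Fintype.bijective_iff_injective_and_card]
  refine ⟨?_, by simp⟩
  rintro (i | i) (j | j) h <;> simp_all [auxE1, Fin.ext_iff] <;> omega

theorem auxE2_bij (n : ℕ) : Function.Bijective (auxE2 n) := by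
  rw [Fintype.bijective_iff_injective_and_card]
  refine ⟨?_, by simp⟩
  rintro (i | i) (j | j) h <;> (try fin_cases i) <;> (try fin_cases j) <;>
    have h' := congrArg Fin.val h <;> simp [auxE2] at h' <;> first | rfl | omega | (congr 1; ext; omega)

theorem aux_det_eq {m p R : Type*} [Fintype m] [DecidableEq m] [Fintype p] [DecidableEq p]
    [CommRing R] (e : p → m) (he : Function.Bijective e) (M : Matrix m m R) (N : Matrix p p R)
    (h : ∀ i j, N i j = M (e i) (e j)) : N.det = M.det := by
  have : N = M.submatrix (Equiv.ofBijective e he) (Equiv.ofBijective e he) := by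
    ext i j; simp [h]
  rw [this, Matrix.det_submatrix_equiv_self]

theorem aux_det_sq {m p R : Type*} [Fintype m] [DecidableEq m] [Fintype p] [DecidableEq p]
    [CommRing R] (e f : p → m) (he : Function.Bijective e) (hf : Function.Bijective f)
    (M : Matrix m m R) (N : Matrix p p R)
    (h : ∀ i j, N i j = M (e i) (f j)) : N.det ^ 2 = M.det ^ 2 := by
  let s : Equiv.Perm m := (Equiv.ofBijective f hf).symm.trans (Equiv.ofBijective e he)
  have h1 : N.det = (M.submatrix s id).det := by
    refine aux_det_eq f hf _ _ fun i j => ?_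
    have : (Equiv.ofBijective f hf).symm (f i) = i :=
      (Equiv.ofBijective f hf).symm_apply_apply i
    simp [s, h, this]
  rw [h1, Matrix.det_permute, mul_pow]
  rcases Int.units_eq_one_or (Equiv.Perm.sign s) with h | h <;> simp [h]

/-- Dodgson condensation for Hankel determinants: if `H k n` denotes the `n × n` Hankel
determinant `det((a(k+i+j))_{i,j=0}^{n-1})` of a sequence `a` in a commutative ring, then
`H(k,r)·H(k+2,r-2) - H(k+2,r-1)·H(k,r-1) + H(k+1,r-1)² = 0` for all `r ≥ 2` and `k ≥ 0`. -/
theorem hankel_det_condensation {R : Type*} [CommRing R] (a : ℕ → R)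
    (H : ℕ → ℕ → R)
    (hH : ∀ k n, H k n = (Matrix.of fun i j : Fin n => a (k + i.1 + j.1)).det)
    (r : ℕ) (hr : 2 ≤ r) (k : ℕ) :
    H k r * H (k + 2) (r - 2) - H (k + 2) (r - 1) * H k (r - 1) +
      H (k + 1) (r - 1) ^ 2 = 0 := by
  obtain ⟨n, rfl⟩ : ∃ n, r = n + 2 := ⟨r - 2, by omega⟩
  simp only [show n + 2 - 2 = n by omega, show n + 2 - 1 = n + 1 by omega]
  let p : Fin 2 → ℕ := fun j => if j = 0 then 0 else n + 1
  have key := aux_gen (Matrix.of fun i j : Fin n => a (k + 2 + i.1 + j.1))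
    (fun j x => a (k + (x.1 + 1) + p j)) (fun i y => a (k + p i + (y.1 + 1)))
    (fun i j => a (k + p i + p j))
  have t : ∀ x y : ℕ, x = y → a x = a y := fun x y h => by rw [h]
  rw [aux_det_eq (auxE2 n) (auxE2_bij n)
      (Matrix.of fun i j : Fin (n + 2) => a (k + i.1 + j.1)) (Matrix.fromBlocks _ _ _ _) (by
        rintro (i | i) (j | j) <;> (try fin_cases i) <;> (try fin_cases j) <;>
          simp [auxE2, p] <;> apply t <;> omega),
    aux_det_eq (auxE1 n) (auxE1_bij n)
      (Matrix.of fun i j : Fin (n + 1) => a (k + 2 + i.1 + j.1))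
      (Matrix.fromBlocks _ (Matrix.of fun x (_ : Unit) => a (k + (x.1 + 1) + p 1))
        (Matrix.of fun (_ : Unit) (y : Fin n) => a (k + p 1 + (y.1 + 1))) _) (by
        rintro (i | i) (j | j) <;>
          simp [auxE1, p] <;> apply t <;> omega),
    aux_det_eq (auxE0 n) (auxE0_bij n)
      (Matrix.of fun i j : Fin (n + 1) => a (k + i.1 + j.1))
      (Matrix.fromBlocks _ (Matrix.of fun x (_ : Unit) => a (k + (x.1 + 1) + p 0))
        (Matrix.of fun (_ : Unit) (y : Fin n) => a (k + p 0 + (y.1 + 1))) _) (by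
        rintro (i | i) (j | j) <;>
          simp [auxE0, p] <;> apply t <;> omega),
    ← Matrix.det_transpose (Matrix.fromBlocks _ (Matrix.of fun x (_ : Unit) => a (k + (x.1 + 1) + p 0))
        (Matrix.of fun (_ : Unit) (y : Fin n) => a (k + p 1 + (y.1 + 1))) _),
    aux_det_eq id Function.bijective_id
      (Matrix.fromBlocks (Matrix.of fun i j : Fin n => a (k + 2 + i.1 + j.1))
        (Matrix.of fun x (_ : Unit) => a (k + (x.1 + 1) + p 1))
        (Matrix.of fun (_ : Unit) (y : Fin n) => a (k + p 0 + (y.1 + 1)))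
        (Matrix.of fun _ _ => a (k + p 0 + p 1))) (Matrix.transpose _) (by
        rintro (i | i) (j | j) <;>
          simp [p] <;> apply t <;> omega),
    ← pow_two,
    aux_det_sq (auxE0 n) (auxE1 n) (auxE0_bij n) (auxE1_bij n)
      (Matrix.of fun i j : Fin (n + 1) => a (k + 1 + i.1 + j.1)) (Matrix.fromBlocks _ _ _ _) (by
        rintro (i | i) (j | j) <;>
          simp [auxE0, auxE1, p] <;> apply t <;> omega)] at key
  simp only [← hH] at key
  linear_combination key
end

section
/- Let p be a polynomial with rational coefficients of degree exactly m, and let r be an integer with 1 ≤ r ≤ m+1. Then there exists a polynomial q over ℚ of degree exactly r(m-r+1) such that for every rational number x, det((p(x+i+j))_{i,j=0}^{r-1}) = q(x); that is, the r×r Hankel determinant of the polynomial sequence is itself a polynomial in the starting index, of degree r(m-r+1). -/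
open Polynomial in
theorem hk_coeff (m : ℕ) (p : ℚ[X]) (hp : p.natDegree ≤ m) (k : ℕ) :
    (∀ n, m < n + k → (((Polynomial.taylor (1:ℚ) - 1 : Module.End ℚ ℚ[X]) ^ k) p).coeff n = 0) ∧
    (∀ n, m = n + k → (((Polynomial.taylor (1:ℚ) - 1 : Module.End ℚ ℚ[X]) ^ k) p).coeff n
      = p.coeff m * (m.descFactorial k : ℚ)) := by
  induction k with
  | zero =>
    refine ⟨fun n hn => ?_, fun n hn => ?_⟩
    · simpa using coeff_eq_zero_of_natDegree_lt (by omega)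
    · subst hn; simp
  | succ k ih =>
    rw [pow_succ']
    generalize hq : ((Polynomial.taylor (1:ℚ) - 1 : Module.End ℚ ℚ[X]) ^ k) p = q at ih
    have key : ∀ n, m ≤ n + 1 + k → (((Polynomial.taylor (1:ℚ) - 1 : Module.End ℚ ℚ[X])) q).coeff n
        = (n + 1) * q.coeff (n+1) := by
      intro n hn
      have hd : q.natDegree < n + 2 := by
        rw [Nat.lt_succ_iff, natDegree_le_iff_coeff_eq_zero]
        intro N hN
        exact ih.1 N (by omega)
      have h1 : (taylor (1:ℚ) q).coeff n = q.coeff n + (n + 1) * q.coeff (n+1) := by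
        rw [taylor_coeff, hasseDeriv_apply, sum_over_range' _ _ (n+2) hd]
        · rw [Finset.sum_range_succ, Finset.sum_range_succ, eval_add, eval_add, eval_finsetSum,
            Finset.sum_eq_zero]
          · simp
          · intro i hi
            rw [Nat.choose_eq_zero_of_lt (Finset.mem_range.1 hi)]
            simp
        · simp
      have h2 : ((Polynomial.taylor (1:ℚ) - 1 : Module.End ℚ ℚ[X])) q = taylor 1 q - q := rfl
      rw [h2, coeff_sub, h1]; ring
    have h3 : ((Polynomial.taylor (1:ℚ) - 1 : Module.End ℚ ℚ[X]) * (Polynomial.taylor (1:ℚ) - 1) ^ k) p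
       = (Polynomial.taylor (1:ℚ) - 1 : Module.End ℚ ℚ[X]) q := by
      rw [← hq]; rfl
    rw [h3]
    refine ⟨fun n hn => ?_, fun n hn => ?_⟩
    · rw [key n (by omega), ih.1 (n+1) (by omega), mul_zero]
    · rw [key n (by omega), ih.2 (n+1) (by omega), Nat.descFactorial_succ,
        show m - k = n + 1 by omega]
      push_cast; ring

open Polynomial in
theorem hk_det_coeff (r m : ℕ) (M : Matrix (Fin r) (Fin r) ℚ[X])
    (h : ∀ i j, (M i j).natDegree ≤ m) :
    M.det.natDegree ≤ r * m ∧
    M.det.coeff (r * m) = (Matrix.of fun i j => (M i j).coeff m).det := by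
  constructor
  · rw [Matrix.det_apply]
    refine natDegree_sum_le_of_forall_le _ _ fun σ _ => ?_
    refine (natDegree_smul_le _ _).trans ?_
    refine (natDegree_prod_le _ _).trans ?_
    refine (Finset.sum_le_sum fun i _ => h (σ i) i).trans ?_
    simp
  · rw [Matrix.det_apply, Matrix.det_apply, finsetSum_coeff]
    refine Finset.sum_congr rfl fun σ _ => ?_
    rw [coeff_smul]
    congr 1
    have := coeff_prod_of_natDegree_le (Finset.univ : Finset (Fin r)) (fun i => M (σ i) i) m
      (fun i _ => h _ _)
    simpa using this

theorem hk_num (m r : ℕ) (hrm : r ≤ m + 1) :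
    (Matrix.of fun i j : Fin r => (m.descFactorial (i.1 + j.1) : ℚ)).det ≠ 0 := by
  have e : (Matrix.of fun i j : Fin r => (m.descFactorial (i.1 + j.1) : ℚ)) =
      Matrix.of fun i j : Fin r => (m.descFactorial i.1 : ℚ) *
        (Matrix.of fun i j : Fin r => (descPochhammer ℚ j.1).eval (((m - i.1 : ℕ)) : ℚ)) i j := by
    ext i j
    simp only [Matrix.of_apply]
    rw [descPochhammer_eval_eq_descFactorial,
      ← Nat.descFactorial_mul_descFactorial (Nat.le_add_right i.1 j.1), Nat.add_sub_cancel_left]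
    push_cast; ring
  rw [e, Matrix.det_mul_column, ← Matrix.det_eval_matrixOfPolynomials_eq_det_vandermonde
    (fun i : Fin r => ((m - i.1 : ℕ) : ℚ)) (fun j => descPochhammer ℚ j.1)
    (fun i => descPochhammer_natDegree ℚ _) (fun i => monic_descPochhammer ℚ _)]
  refine mul_ne_zero ?_ ?_
  · rw [Finset.prod_ne_zero_iff]
    intro i _
    have := i.2
    rw [Nat.cast_ne_zero, Ne, Nat.descFactorial_eq_zero_iff_lt]
    omega
  · rw [Matrix.det_vandermonde_ne_zero_iff]
    intro i j hij
    have := i.2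
    have := j.2
    have h : m - i.1 = m - j.1 := by
      have h2 : ((m - i.1 : ℕ) : ℚ) = ((m - j.1 : ℕ) : ℚ) := hij
      exact_mod_cast h2
    ext; omega

open Polynomial in
theorem hk_fact (r : ℕ) (p : ℚ[X]) (T : Module.End ℚ ℚ[X]) :
    (Matrix.of fun i j : Fin r => (T ^ (i.1 + j.1)) p).det =
    (Matrix.of fun i j : Fin r => ((T - 1) ^ (i.1 + j.1)) p).det := by
  let L : Matrix (Fin r) (Fin r) ℚ[X] := Matrix.of fun i j => ((i.1.choose j.1 : ℕ) : ℚ[X])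
  have hL : L.det = 1 := by
    rw [Matrix.det_of_isLowerTriangular]
    · simp [L]
    · intro i j hij
      have : i < j := hij
      simp [L, Nat.choose_eq_zero_of_lt (show i.1 < j.1 from this)]
  have hT : ∀ n, n < r → T ^ n = ∑ a : Fin r, (n.choose a.1) • (T - 1) ^ a.1 := by
    intro n hn
    conv_lhs => rw [← sub_add_cancel T 1, (Commute.one_right (T - 1)).add_pow]
    rw [Fin.sum_univ_eq_sum_range (fun a => (n.choose a) • (T - 1) ^ a) r]
    rw [← Finset.sum_subset (Finset.range_subset_range.2 (show n + 1 ≤ r from hn))]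
    · refine Finset.sum_congr rfl fun a _ => ?_
      rw [one_pow, mul_one, nsmul_eq_mul, (Nat.cast_commute _ _).eq]
    · intro a _ ha
      rw [Nat.choose_eq_zero_of_lt (by simpa using ha), zero_smul]
  have : (Matrix.of fun i j : Fin r => (T ^ (i.1 + j.1)) p) =
      L * (Matrix.of fun i j : Fin r => ((T - 1) ^ (i.1 + j.1)) p) * L.transpose := by
    ext1 i j
    rw [Matrix.of_apply, pow_add, hT _ i.2, hT _ j.2, Finset.sum_mul_sum, Finset.sum_comm]
    simp only [Matrix.mul_apply, L, Matrix.of_apply, Matrix.transpose_apply, Finset.sum_mul,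
      LinearMap.sum_apply]
    refine Finset.sum_congr rfl fun b _ => Finset.sum_congr rfl fun a _ => ?_
    rw [smul_mul_smul_comm, ← pow_add, LinearMap.smul_apply, nsmul_eq_mul]
    push_cast; ring
  rw [this, Matrix.det_mul, Matrix.det_mul, Matrix.det_transpose, hL]
  ring

/-- If `p` is a rational polynomial of degree exactly `m` and `1 ≤ r ≤ m + 1`, then the
`r × r` Hankel determinant `det((p(x+i+j))_{i,j=0}^{r-1})` is a polynomial in the starting
index `x`, of degree exactly `r(m-r+1)`. -/
theorem hankel_det_polynomial_is_polynomial (m r : ℕ) (p : Polynomial ℚ)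
    (hp : p.degree = (m : ℕ)) (hr : 1 ≤ r) (hrm : r ≤ m + 1) :
    ∃ q : Polynomial ℚ, q.degree = (r * (m + 1 - r) : ℕ) ∧
      ∀ x : ℚ, (Matrix.of fun i j : Fin r => p.eval (x + i.1 + j.1)).det = q.eval x := by
  classical
  have hpn : p.natDegree = m := Polynomial.natDegree_eq_of_degree_eq_some hp
  have hlc : p.coeff m ≠ 0 := by
    rw [← hpn]
    have : p ≠ 0 := by rintro rfl; simp at hp
    simpa using this
  set T : Module.End ℚ (Polynomial ℚ) := Polynomial.taylor (1:ℚ) with hT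
  refine ⟨(Matrix.of fun i j : Fin r => (T ^ (i.1 + j.1)) p).det, ?_, ?_⟩
  · rw [hk_fact]
    set M := (Matrix.of fun i j : Fin r => ((T - 1) ^ (i.1 + j.1)) p) with hM
    let M' : Matrix (Fin r) (Fin r) (Polynomial ℚ) := Matrix.of fun i j =>
      Polynomial.X ^ i.1 * (Matrix.of fun i j => Polynomial.X ^ j.1 * M i j) i j
    have hM' : ∀ i j, M' i j = M i j * Polynomial.X ^ (i.1 + j.1) := by
      intro i j
      simp only [M', Matrix.of_apply]; ring
    have hdeg : ∀ i j, (M' i j).natDegree ≤ m := by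
      intro i j
      rw [hM', Polynomial.natDegree_le_iff_coeff_eq_zero]
      intro N hN
      rw [Polynomial.coeff_mul_X_pow']
      split_ifs with h
      · exact (hk_coeff m p hpn.le _).1 _ (by omega)
      · rfl
    have hco : ∀ i j, (M' i j).coeff m = p.coeff m * (m.descFactorial (i.1 + j.1) : ℚ) := by
      intro i j
      rw [hM', Polynomial.coeff_mul_X_pow']
      split_ifs with h
      · exact (hk_coeff m p hpn.le _).2 _ (by omega)
      · rw [Nat.descFactorial_eq_zero_iff_lt.2 (by omega)]; simp
    obtain ⟨h1, h2⟩ := hk_det_coeff r m M' hdeg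
    have h3 : M'.det.coeff (r * m) ≠ 0 := by
      rw [h2]
      have : (Matrix.of fun i j => (M' i j).coeff m) =
          p.coeff m • (Matrix.of fun i j : Fin r => (m.descFactorial (i.1 + j.1) : ℚ)) := by
        ext i j
        simp [hco]
      rw [this, Matrix.det_smul]
      exact mul_ne_zero (pow_ne_zero _ hlc) (hk_num m r hrm)
    have h4 : M'.det.degree = ((r * m : ℕ) : WithBot ℕ) :=
      Polynomial.degree_eq_of_le_of_coeff_ne_zero (Polynomial.degree_le_of_natDegree_le h1) h3
    have h5 : M'.det = Polynomial.X ^ (r * (r - 1)) * M.det := by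
      simp only [M']
      rw [Matrix.det_mul_column, Matrix.det_mul_row, ← mul_assoc, Finset.prod_pow_eq_pow_sum,
        ← pow_add, Fin.sum_univ_eq_sum_range (fun i => i) r, ← Finset.sum_range_id_mul_two, mul_two]
    rw [h5] at h4
    have h6 : M.det ≠ 0 := by
      intro h0
      rw [h0, mul_zero, Polynomial.degree_zero] at h4
      exact WithBot.bot_ne_coe h4
    have h7 := Polynomial.natDegree_eq_of_degree_eq_some h4
    rw [Polynomial.natDegree_X_pow_mul _ h6] at h7
    rw [Polynomial.degree_eq_natDegree h6]
    congr 1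
    obtain ⟨s, rfl⟩ : ∃ s, r = s + 1 := ⟨r - 1, by omega⟩
    obtain ⟨t, rfl⟩ : ∃ t, m = s + t := ⟨m - s, by omega⟩
    rw [show s + t + 1 - (s + 1) = t by omega]
    rw [Nat.add_sub_cancel, mul_add] at h7
    omega
  · intro x
    have hTn : ∀ n : ℕ, ∀ y : ℚ, ((T ^ n) p).eval y = p.eval (y + n) := by
      intro n
      induction n with
      | zero => intro y; simp
      | succ n ih =>
        intro y
        rw [pow_succ']
        have : (T * T ^ n) p = Polynomial.taylor 1 ((T ^ n) p) := rfl
        rw [this, Polynomial.taylor_eval, ih]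
        congr 1; push_cast; ring
    rw [← Polynomial.coe_evalRingHom, RingHom.map_det]
    congr 1
    ext i j
    simp [hTn, add_assoc]
end

section
/- For all integers r ≥ 2, s ≥ 0 and k ≥ 0, the r-Hoggatt binomials satisfy the quadratic recurrence ⟨k choose s⟩_r · ⟨k+2 choose s+2⟩_{r-2} + ⟨k+2 choose s+1⟩_{r-1} · ⟨k choose s+1⟩_{r-1} = (⟨k+1 choose s+1⟩_{r-1})^2. -/
def sfac (n : ℕ) : ℚ := ∏ i ∈ Finset.range n, (i.factorial : ℚ)

lemma sfac_succ (n : ℕ) : sfac (n + 1) = sfac n * (n.factorial : ℚ) := by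
  simp [sfac, Finset.prod_range_succ]

lemma sfac_ne (n : ℕ) : sfac n ≠ 0 := by
  unfold sfac
  exact Finset.prod_ne_zero_iff.mpr fun i _ => by exact_mod_cast i.factorial_ne_zero

lemma fac_ne (n : ℕ) : (n.factorial : ℚ) ≠ 0 := by exact_mod_cast n.factorial_ne_zero

lemma hoggatt_formula (r k d : ℕ) : hoggatt r (k + d) k =
    sfac r * sfac k * sfac d * sfac (k + d + r) /
      (sfac (k + r) * sfac (k + d) * sfac (d + r)) := by
  induction r with
  | zero =>
    have := sfac_ne k
    have := sfac_ne d
    have := sfac_ne (k + d)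
    simp only [hoggatt, Finset.range_zero, Finset.prod_empty, add_zero]
    have h0 : sfac 0 = 1 := by simp [sfac]
    rw [h0]
    field_simp
  | succ r ih =>
    have e : hoggatt (r + 1) (k + d) k = hoggatt r (k + d) k *
        (((k + d + r).choose k : ℚ) / ((k + r).choose k : ℚ)) := by
      exact Finset.prod_range_succ _ _
    have e1 : ((k + d + r).choose k : ℚ) =
        (k + d + r).factorial / (k.factorial * (d + r).factorial) := by
      rw [show k + d + r = k + (d + r) by ring]
      exact Nat.cast_add_choose ℚ
    have e2 : ((k + r).choose k : ℚ) = (k + r).factorial / (k.factorial * r.factorial) :=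
      Nat.cast_add_choose ℚ
    rw [e, ih, e1, e2]
    simp only [← add_assoc, sfac_succ]
    have := sfac_ne (k + r)
    have := sfac_ne (k + d)
    have := sfac_ne (d + r)
    have := fac_ne k
    have := fac_ne r
    have := fac_ne (d + r)
    have := fac_ne (k + r)
    field_simp

lemma hoggatt_self (r k : ℕ) : hoggatt r k k = 1 := by
  unfold hoggatt
  refine Finset.prod_eq_one fun j _ => div_self ?_
  exact_mod_cast (Nat.choose_pos (by omega)).ne'

lemma hoggatt_zero (r n k : ℕ) (h : n < k) : hoggatt (r + 1) n k = 0 := by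
  unfold hoggatt
  refine Finset.prod_eq_zero (i := 0) (by simp) ?_
  simp [Nat.choose_eq_zero_of_lt h]

/-- For `r ≥ 2` and `s, k ≥ 0`, the `r`-Hoggatt binomials satisfy the quadratic recurrence
`⟨k choose s⟩_r · ⟨k+2 choose s+2⟩_{r-2} + ⟨k+2 choose s+1⟩_{r-1} · ⟨k choose s+1⟩_{r-1}
  = ⟨k+1 choose s+1⟩_{r-1}²`. -/
theorem hoggatt_quadratic_recurrence (r s k : ℕ) (hr : 2 ≤ r) :
    hoggatt r k s * hoggatt (r - 2) (k + 2) (s + 2) +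
      hoggatt (r - 1) (k + 2) (s + 1) * hoggatt (r - 1) k (s + 1) =
    (hoggatt (r - 1) (k + 1) (s + 1)) ^ 2 := by
  obtain ⟨m, rfl⟩ := Nat.exists_eq_add_of_le' hr
  simp only [Nat.add_sub_cancel, show m + 2 - 1 = m + 1 by omega]
  rcases lt_trichotomy k s with h | rfl | h
  · rw [hoggatt_zero (m + 1) k s h, hoggatt_zero m k (s + 1) (by omega),
      hoggatt_zero m (k + 1) (s + 1) (by omega)]
    ring
  · rw [hoggatt_self, hoggatt_self, hoggatt_self, hoggatt_zero m k (k + 1) (by omega)]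
    ring
  · obtain ⟨e, rfl⟩ := Nat.exists_eq_add_of_lt h
    have h1 := hoggatt_formula (m + 2) s (e + 1)
    have h2 := hoggatt_formula m (s + 2) (e + 1)
    have h3 := hoggatt_formula (m + 1) (s + 1) (e + 2)
    have h4 := hoggatt_formula (m + 1) (s + 1) e
    have h5 := hoggatt_formula (m + 1) (s + 1) (e + 1)
    rw [show s + (e + 1) + (m + 2) = s + e + m + 3 by ring, show s + (m + 2) = s + m + 2 by ring,
      show e + 1 + (m + 2) = e + m + 3 by ring, show s + (e + 1) = s + e + 1 by ring] at h1
    rw [show s + 2 + (e + 1) + m = s + e + m + 3 by ring, show s + 2 + m = s + m + 2 by ring,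
      show e + 1 + m = e + m + 1 by ring, show s + 2 + (e + 1) = s + e + 1 + 2 by ring] at h2
    rw [show s + 1 + (e + 2) + (m + 1) = s + e + m + 4 by ring,
      show s + 1 + (m + 1) = s + m + 2 by ring,
      show e + 2 + (m + 1) = e + m + 3 by ring,
      show s + 1 + (e + 2) = s + e + 1 + 2 by ring] at h3
    rw [show s + 1 + e + (m + 1) = s + e + m + 2 by ring,
      show s + 1 + (m + 1) = s + m + 2 by ring,
      show e + (m + 1) = e + m + 1 by ring,
      show s + 1 + e = s + e + 1 by ring] at h4
    rw [show s + 1 + (e + 1) + (m + 1) = s + e + m + 3 by ring,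
      show s + 1 + (m + 1) = s + m + 2 by ring,
      show e + 1 + (m + 1) = e + m + 2 by ring,
      show s + 1 + (e + 1) = s + e + 1 + 1 by ring] at h5
    rw [h1, h2, h3, h4, h5]
    simp only [sfac_succ, Nat.factorial_succ]
    push_cast
    have := sfac_ne s
    have := sfac_ne m
    have := sfac_ne e
    have := sfac_ne (s + m)
    have := sfac_ne (s + e)
    have := sfac_ne (e + m)
    have := sfac_ne (s + e + m)
    have := fac_ne s
    have := fac_ne m
    have := fac_ne e
    have := fac_ne (s + m)
    have := fac_ne (s + e)
    have := fac_ne (e + m)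
    have := fac_ne (s + e + m)
    field_simp
    ring
end

section
/- For all integers r ≥ 1 and 0 ≤ k ≤ n, one has ⟨n choose k⟩_r = ∏_{j=0}^{r-1} (n+1-k+j)^{(k+r-1-2j)} / (1+j)^{(k+r-1-2j)}, where for an integer t and a rational x the generalized rising factorial is x^{(t)} = x(x+1)···(x+t-1) if t > 0, x^{(0)} = 1, and x^{(t)} = 1/((x-1)(x-2)···(x+t)) if t < 0 (all factors occurring in the denominators here are nonzero). -/
/-- The generalized rising factorial `x^{(t)}` of a rational `x` with integer exponent `t`:
`x^{(t)} = x(x+1)⋯(x+t-1)` for `t > 0`, `x^{(0)} = 1`, and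
`x^{(t)} = 1/((x-1)(x-2)⋯(x+t))` for `t < 0`. -/
def genRisingFactorial (x : ℚ) (t : ℤ) : ℚ :=
  if 0 ≤ t then ∏ i ∈ Finset.range t.toNat, (x + i)
  else (∏ i ∈ Finset.range (-t).toNat, (x - 1 - i))⁻¹

theorem grf_up (p d : ℕ) :
    ∏ i ∈ Finset.range d, ((p : ℚ) + 1 + i) = ((p + d).factorial : ℚ) / (p.factorial : ℚ) := by
  have hp : (p.factorial : ℚ) ≠ 0 := by exact_mod_cast p.factorial_ne_zero
  induction d with
  | zero => simp [hp]
  | succ d ih =>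
    rw [Finset.prod_range_succ, ih, ← add_assoc, Nat.factorial_succ]
    push_cast
    field_simp
    ring

theorem grf_down (q d : ℕ) :
    ∏ i ∈ Finset.range d, (((q + d : ℕ) : ℚ) + 1 - 1 - i) =
      ((q + d).factorial : ℚ) / (q.factorial : ℚ) := by
  rw [← grf_up, ← Finset.prod_range_reflect]
  refine Finset.prod_congr rfl fun i hi => ?_
  have hi := Finset.mem_range.mp hi
  have : ((d - 1 - i : ℕ) : ℚ) = (d : ℚ) - 1 - i := by
    rw [Nat.sub_sub, Nat.cast_sub (by omega)]; push_cast; ring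
  rw [this]
  push_cast
  ring

theorem grf_eq (p q : ℕ) (x : ℚ) (t : ℤ) (hx : x = (p : ℚ) + 1) (ht : t = (q : ℤ) - p) :
    genRisingFactorial x t = (q.factorial : ℚ) / (p.factorial : ℚ) := by
  subst hx ht
  unfold genRisingFactorial
  split_ifs with h
  · obtain ⟨d, rfl⟩ := Nat.exists_eq_add_of_le (show p ≤ q by omega)
    rw [show (((p + d : ℕ) : ℤ) - p).toNat = d by omega, grf_up]
  · obtain ⟨d, rfl⟩ := Nat.exists_eq_add_of_le (show q ≤ p by omega)
    rw [show (-((q : ℤ) - (q + d : ℕ))).toNat = d by omega, grf_down, inv_div]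

theorem hoggatt_genRisingFactorial_representation (r n k : ℕ) (hr : 1 ≤ r) (hk : k ≤ n) :
    hoggatt r n k =
      ∏ j ∈ Finset.range r,
        genRisingFactorial ((n : ℚ) + 1 - k + j) ((k : ℤ) + r - 1 - 2 * j) /
          genRisingFactorial (1 + (j : ℚ)) ((k : ℤ) + r - 1 - 2 * j) := by
  obtain ⟨a, rfl⟩ := Nat.exists_eq_add_of_le hk
  have hf : ∀ m : ℕ, (m.factorial : ℚ) ≠ 0 := fun m => by exact_mod_cast m.factorial_ne_zero
  have h1 : ∀ j ∈ Finset.range r,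
      genRisingFactorial (((k + a : ℕ) : ℚ) + 1 - k + j) ((k : ℤ) + r - 1 - 2 * j) /
          genRisingFactorial (1 + (j : ℚ)) ((k : ℤ) + r - 1 - 2 * j) =
      (((k + a + (r - 1 - j)).factorial : ℚ) / ((k + (r - 1 - j)).factorial : ℚ)) *
        ((j.factorial : ℚ) / ((a + j).factorial : ℚ)) := by
    intro j hj
    have hj := Finset.mem_range.mp hj
    rw [grf_eq (a + j) (k + a + (r - 1 - j)) _ _ (by push_cast; ring) (by omega),
      grf_eq j (k + (r - 1 - j)) _ _ (by ring) (by omega)]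
    have := hf (a + j)
    have := hf j
    have := hf (k + (r - 1 - j))
    field_simp
  rw [Finset.prod_congr rfl h1, Finset.prod_mul_distrib,
    Finset.prod_range_reflect
      (fun j => ((k + a + j).factorial : ℚ) / ((k + j).factorial : ℚ)) r,
    ← Finset.prod_mul_distrib]
  unfold hoggatt
  refine Finset.prod_congr rfl fun j _ => ?_
  rw [Nat.cast_choose ℚ (show k ≤ k + a + j by omega),
    Nat.cast_choose ℚ (show k ≤ k + j by omega),
    show k + a + j - k = a + j by omega, show k + j - k = j by omega]
  have := hf (a + j)
  have := hf j
  have := hf k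
  have := hf (k + j)
  field_simp
end

section
/- For all integers r ≥ 1 and m ≥ r - 1, the Hankel determinant at the first nonzero index satisfies d_{m-r+1}(m, r) = det((C(m-r+1+i+j, m))_{i,j=0}^{r-1}) = (-1)^{r(r-1)/2}. -/
theorem antitri_det_aux (n : ℕ) : ∀ A : Matrix (Fin n) (Fin n) ℚ,
    (∀ i j : Fin n, i.1 + j.1 + 1 < n → A i j = 0) →
    (∀ i j : Fin n, i.1 + j.1 + 1 = n → A i j = 1) →
    A.det = (-1 : ℚ) ^ (n * (n - 1) / 2) := by
  induction n with
  | zero => intro A _ _; simp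
  | succ n ih =>
    intro A h0 h1
    rw [Matrix.det_succ_row_zero, Finset.sum_eq_single (Fin.last n)]
    · rw [h1 0 (Fin.last n) (by simp), ih]
      · rw [mul_one, ← pow_add, Fin.val_last]
        congr 1
        rw [← Finset.sum_range_id_mul_two, ← Finset.sum_range_id_mul_two,
          Finset.sum_range_succ]
        omega
      · intro i j h
        simp only [Matrix.submatrix_apply, Fin.succAbove_last]
        apply h0
        simp only [Fin.val_succ, Fin.val_castSucc]
        omega
      · intro i j h
        simp only [Matrix.submatrix_apply, Fin.succAbove_last]
        apply h1
        simp only [Fin.val_succ, Fin.val_castSucc]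
        omega
    · intro j _ hj
      rw [h0 0 j]
      · simp
      · have := Fin.val_lt_last hj
        simp only [Fin.val_zero]
        omega
    · simp

/-- For `r ≥ 1` and `m ≥ r - 1`, the Hankel determinant at the first nonzero index
satisfies `d_{m-r+1}(m,r) = det((C(m-r+1+i+j, m))_{i,j=0}^{r-1}) = (-1)^{r(r-1)/2}`. -/
theorem hankel_det_pascal_column_first_nonzero (r m : ℕ) (hr : 1 ≤ r) (hm : r - 1 ≤ m) :
    (Matrix.of fun i j : Fin r => ((m + 1 - r + i.1 + j.1).choose m : ℚ)).det =
      (-1 : ℚ) ^ (r * (r - 1) / 2) := by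
  apply antitri_det_aux
  · intro i j h
    rw [Matrix.of_apply, Nat.choose_eq_zero_of_lt (by omega), Nat.cast_zero]
  · intro i j h
    have : m + 1 - r + i.1 + j.1 = m := by omega
    rw [Matrix.of_apply, this, Nat.choose_self, Nat.cast_one]
end
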